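/- Let g = sl_{n+1}(ℂ) and let n = n_T be a nilradical with K(n) = {β₁,…,β_k}. Set T' = T ∩ {α₁,…,α_{k−1}} and T'' = T ∩ {α_{n+2−k},…,α_n}. Then the stabiliser n^ξ̄ of a cascade point is a generic stabiliser for the coadjoint representation (n : n*) if and only if σ(T') = T'', where σ is the symmetry of the Dynkin diagram of type A_n, σ(α_j) = α_{n+1−j}. In particular, if σ(T) = T then n_T has a generic stabiliser. -/

import Mathlib

open Module LieAlgebra
open scoped Classical

noncomputable section

/-! ### Generalities: coadjoint stabilisers, index, Frobenius semiradical -/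

/-- The stabiliser `q^ξ = {x : q | ξ([x, q]) = 0}` of `ξ ∈ q*` for the coadjoint
representation of a Lie algebra `q`. -/
def coadStab (𝕜 : Type*) (Q : Type*) [CommRing 𝕜] [LieRing Q] [LieAlgebra 𝕜 Q]
    (ξ : Module.Dual 𝕜 Q) : Submodule 𝕜 Q where
  carrier := {x | ∀ y, ξ ⁅x, y⁆ = 0}
  add_mem' := by
    intro a b ha hb y
    rw [Set.mem_setOf_eq] at ha hb
    rw [add_lie, map_add, ha y, hb y, add_zero]
  zero_mem' := by intro y; rw [zero_lie, map_zero]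
  smul_mem' := by
    intro c x hx y
    rw [Set.mem_setOf_eq] at hx
    rw [smul_lie, map_smul, hx y, smul_zero]

/-- The index of a Lie algebra: the minimal dimension of a coadjoint stabiliser. -/
def lieIndex (𝕜 : Type*) (Q : Type*) [CommRing 𝕜] [LieRing Q] [LieAlgebra 𝕜 Q] : ℕ :=
  ⨅ ξ : Module.Dual 𝕜 Q, Module.finrank 𝕜 (coadStab 𝕜 Q ξ)

/-- `ξ ∈ q*` is regular if its stabiliser has minimal dimension. -/
def IsRegularDual (𝕜 : Type*) (Q : Type*) [CommRing 𝕜] [LieRing Q] [LieAlgebra 𝕜 Q]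
    (ξ : Module.Dual 𝕜 Q) : Prop :=
  Module.finrank 𝕜 (coadStab 𝕜 Q ξ) = lieIndex 𝕜 Q

/-- The Frobenius semiradical `F(q) = Σ_{ξ regular} q^ξ`. -/
def frobeniusSemiradical (𝕜 : Type*) (Q : Type*) [CommRing 𝕜] [LieRing Q] [LieAlgebra 𝕜 Q] :
    Submodule 𝕜 Q :=
  ⨆ ξ : {ξ : Module.Dual 𝕜 Q // IsRegularDual 𝕜 Q ξ}, coadStab 𝕜 Q ξ.1

/-! ### Zariski topology on a complex vector space -/

/-- The Zariski topology on a complex vector space: generated by the complements of zero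
sets of polynomial functions (elements of the subalgebra of functions generated by the
linear functionals). -/
def zariskiTop (V : Type*) [AddCommGroup V] [Module ℂ V] : TopologicalSpace V :=
  TopologicalSpace.generateFrom
    {U : Set V | ∃ p ∈ Algebra.adjoin ℂ (Set.range fun l : Module.Dual ℂ V => (l : V → ℂ)),
      U = {v | p v ≠ 0}}

/-- Zariski-open subset of a complex vector space. -/
def zOpen {V : Type*} [AddCommGroup V] [Module ℂ V] (s : Set V) : Prop :=
  (zariskiTop V).IsOpen s

/-- Zariski-dense subset of a complex vector space. -/
def zDense {V : Type*} [AddCommGroup V] [Module ℂ V] (s : Set V) : Prop :=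
  @Dense V (zariskiTop V) s

/-- The dimension of a subset of a complex vector space: the (topological) Krull dimension
with respect to the Zariski topology. -/
def zDim {V : Type*} [AddCommGroup V] [Module ℂ V] (s : Set V) : WithBot ℕ∞ :=
  letI := zariskiTop V
  topologicalKrullDim s

/-! ### Exponentials and stabilisers in the concrete model `n* ≅ n⁻` -/

/-- The (truncated) exponential of a nilpotent endomorphism. For `x` in a nilradical `n`,
`nilExp (ad x)` is the adjoint action of the element `exp x` of the unipotent group
`N = exp(n)`; since `exp : n → N` is bijective, every element of `N` is of this form. -/
def nilExp {L : Type*} [AddCommGroup L] [Module ℂ L] (f : Module.End ℂ L) : Module.End ℂ L :=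
  ∑ i ∈ Finset.range (Module.finrank ℂ L + 1), ((i.factorial : ℂ)⁻¹) • f ^ i

/-- For `v ∈ n⁻ ≅ n*`, the stabiliser of the linear functional `κ(v, ·)|_n` inside a (possibly
larger) subalgebra `q`, namely `{x ∈ q | κ(v, [x, n]) = 0}`, where `κ` is the Killing form.
For `q = n` this is the coadjoint stabiliser `n^v`. -/
def killStab {L : Type*} [LieRing L] [LieAlgebra ℂ L] (v : L) (n q : LieSubalgebra ℂ L) :
    Submodule ℂ L where
  carrier := {x | x ∈ q ∧ ∀ y ∈ n, killingForm ℂ L v ⁅x, y⁆ = 0}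
  add_mem' := by
    rintro a b ⟨ha, ha'⟩ ⟨hb, hb'⟩
    refine ⟨q.add_mem ha hb, fun y hy => ?_⟩
    rw [add_lie, map_add, ha' y hy, hb' y hy, add_zero]
  zero_mem' := ⟨q.zero_mem, fun y hy => by rw [zero_lie, map_zero]⟩
  smul_mem' := by
    rintro c x ⟨hx, hx'⟩
    refine ⟨q.smul_mem c hx, fun y hy => ?_⟩
    rw [smul_lie, map_smul, hx' y hy, smul_zero]

/-! ### Triangular decompositions, root data and the Kostant cascade -/

/-- The support of a root (in simple-root coordinates). -/
def fsupp {SR : Type*} [Fintype SR] (γ : SR → ℤ) : Finset SR :=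
  Finset.univ.filter fun a => γ a ≠ 0

/-- The data of a triangular decomposition of a complex simple Lie algebra `L`:
a Cartan subalgebra, a root-space decomposition indexed by the coordinates of the
roots with respect to the simple roots `SR`, the highest root, and a compatible
family of projections onto sums of root spaces. -/
structure TriangularData (L : Type*) [LieRing L] [LieAlgebra ℂ L]
    (SR : Type*) [Fintype SR] [DecidableEq SR] where
  /-- the set of all roots, written in simple-root coordinates -/
  R : Finset (SR → ℤ)
  /-- the root space attached to `γ`; `rs 0` is the Cartan subalgebra, `rs γ = ⊥` off roots -/
  rs : (SR → ℤ) → Submodule ℂ L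
  /-- the Cartan subalgebra `t` -/
  cartan : LieSubalgebra ℂ L
  rs_zero : rs 0 = cartan.toSubmodule
  rs_dim : ∀ γ ∈ R, Module.finrank ℂ (rs γ) = 1
  rs_bot : ∀ γ : SR → ℤ, γ ≠ 0 → γ ∉ R → rs γ = ⊥
  root_ne_zero : ∀ γ ∈ R, γ ≠ 0
  root_neg : ∀ γ ∈ R, -γ ∈ R
  root_pos_or_neg : ∀ γ ∈ R, (∀ a, 0 ≤ γ a) ∨ (∀ a, γ a ≤ 0)
  root_single : ∀ a : SR, Pi.single a 1 ∈ R
  /-- the highest root `θ` -/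
  theta : SR → ℤ
  theta_mem : theta ∈ R
  theta_highest : ∀ γ ∈ R, γ ≤ theta
  bracket_mem : ∀ γ δ : SR → ℤ, ∀ x ∈ rs γ, ∀ y ∈ rs δ, ⁅x, y⁆ ∈ rs (γ + δ)
  isInternal : DirectSum.IsInternal (fun γ : {γ : SR → ℤ // γ = 0 ∨ γ ∈ R} => rs γ.1)
  /-- `proj S` is the projection onto `⊕_{γ ∈ S} rs γ` along `⊕_{γ ∉ S} rs γ` -/
  proj : Set (SR → ℤ) → (L →ₗ[ℂ] L)
  proj_mem : ∀ (S : Set (SR → ℤ)) (x : L), proj S x ∈ ⨆ γ ∈ S, rs γ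
  proj_compl : ∀ (S : Set (SR → ℤ)) (x : L), x - proj S x ∈ ⨆ γ ∈ Sᶜ, rs γ

namespace TriangularData

variable {L : Type*} [LieRing L] [LieAlgebra ℂ L]
  {SR : Type*} [Fintype SR] [DecidableEq SR]
  (td : TriangularData L SR)

/-- The set `Δ⁺` of positive roots. -/
def posR : Finset (SR → ℤ) := td.R.filter fun γ => ∀ a, 0 ≤ γ a

/-- The set of roots `Δ(n_T)` of the nilradical `n_T` attached to a set `T` of simple
roots: the positive roots having a strictly positive coefficient on some element of `T`. -/
def nilRoots (T : Finset SR) : Finset (SR → ℤ) :=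
  td.posR.filter fun γ => ∃ a ∈ T, 0 < γ a

/-- The nilradical `n_T` of the standard parabolic subalgebra `p_T`. -/
def nilrad (T : Finset SR) : LieSubalgebra ℂ L :=
  LieSubalgebra.lieSpan ℂ L (⋃ γ ∈ (td.nilRoots T : Set (SR → ℤ)), (td.rs γ : Set L))

/-- The Borel subalgebra `b = t ⊕ u` (as a subspace). -/
def borelSub : Submodule ℂ L :=
  td.rs 0 ⊔ ⨆ γ ∈ (td.posR : Set (SR → ℤ)), td.rs γ

/-- The parabolic subalgebra `p_T` (as a subspace): everything except `n_T⁻`. -/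
def parabSub (T : Finset SR) : Submodule ℂ L :=
  td.rs 0 ⊔ ⨆ γ ∈ {γ : SR → ℤ | γ ∈ td.R ∧ -γ ∉ td.nilRoots T}, td.rs γ

/-- The set of roots of the opposite nilradical `n_T⁻`. -/
def negSet (T : Finset SR) : Set (SR → ℤ) := (fun γ => -γ) '' (td.nilRoots T : Set (SR → ℤ))

/-- The opposite nilradical `n_T⁻ ⊆ u⁻`, which is identified with `n_T*` via the
Killing form and the decomposition `g = p_T ⊕ n_T⁻`. -/
def negNilSub (T : Finset SR) : Submodule ℂ L := ⨆ γ ∈ td.negSet T, td.rs γ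

/-- The Heisenberg subset `H_β` attached to a positive root `β`: the positive roots in
the root subsystem generated by `supp β` that are not orthogonal to `β`. -/
def heisRoots (β : SR → ℤ) : Finset (SR → ℤ) :=
  td.posR.filter fun γ => fsupp γ ⊆ fsupp β ∧ (γ = β ∨ β - γ ∈ td.R)

/-- `Φ(β) = Π ∩ H_β`. -/
def Phi (β : SR → ℤ) : Finset SR :=
  Finset.univ.filter fun a => Pi.single a 1 ∈ td.heisRoots β

/-- `K` is the Kostant cascade: a maximal set of pairwise strongly orthogonal positive
roots, containing the highest root, such that each `β ∈ K` is the highest root of the root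
subsystem generated by its support and such that the attached Heisenberg subsets
partition `Δ⁺`. -/
structure IsCascade (K : Finset (SR → ℤ)) : Prop where
  subset_pos : K ⊆ td.posR
  theta_mem : td.theta ∈ K
  strong_orth : ∀ β ∈ K, ∀ β' ∈ K, β ≠ β' → β + β' ∉ td.R ∧ β - β' ∉ td.R
  highest : ∀ β ∈ K, ∀ γ ∈ td.posR, fsupp γ ⊆ fsupp β → γ ≤ β
  partition : ∀ γ ∈ td.posR, ∃! β, β ∈ K ∧ γ ∈ td.heisRoots β

/-- `K(n_T) = K ∩ Δ(n_T)`. -/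
def cascadeK (K : Finset (SR → ℤ)) (T : Finset SR) : Finset (SR → ℤ) := K ∩ td.nilRoots T

/-- The set of simple roots of the optimisation of `n_T`, namely
`T̃ = ⋃_{β ∈ K(n_T)} Φ(β)`; the optimisation of `n_T` is `n_{T̃}`. -/
def optT (K : Finset (SR → ℤ)) (T : Finset SR) : Finset SR :=
  (td.cascadeK K T).biUnion td.Phi

/-- The cascade subspace `E = ⊕_{β ∈ K(n_T)} g_{−β} ⊆ n_T⁻ ≅ n_T*`. -/
def cascadeSub (K : Finset (SR → ℤ)) (T : Finset SR) : Submodule ℂ L :=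
  ⨆ β ∈ (td.cascadeK K T : Set (SR → ℤ)), td.rs (-β)

/-- `v = Σ_{β ∈ K(n_T)} e_{−β}` with all `e_{−β} ∈ g_{−β}` nonzero is a cascade point
of `n_T⁻ ≅ n_T*`. -/
def IsCascadePoint (K : Finset (SR → ℤ)) (T : Finset SR) (v : L) : Prop :=
  ∃ e : (SR → ℤ) → L,
    (∀ β ∈ td.cascadeK K T, e β ∈ td.rs (-β) ∧ e β ≠ 0) ∧ v = ∑ β ∈ td.cascadeK K T, e β

/-- `ind n_T`, computed in the model `n_T* ≅ n_T⁻`. -/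
def nilIndex (T : Finset SR) : ℕ :=
  ⨅ v : ↥(td.negNilSub T), Module.finrank ℂ (killStab (v : L) (td.nilrad T) (td.nilrad T))

/-- `v ∈ n_T⁻ ≅ n_T*` is a regular point. -/
def IsRegPoint (T : Finset SR) (v : L) : Prop :=
  v ∈ td.negNilSub T ∧
    Module.finrank ℂ (killStab v (td.nilrad T) (td.nilrad T)) = td.nilIndex T

/-- The Frobenius semiradical `F(n_T) = Σ_{v regular} n_T^v`. -/
def frobNil (T : Finset SR) : Submodule ℂ L :=
  ⨆ v : {v : L // td.IsRegPoint T v}, killStab (v : L) (td.nilrad T) (td.nilrad T)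

/-- `v ∈ n_T⁻ ≅ n_T*` is a generic point for the coadjoint-type action on `n_T*` of the
unipotent group `exp(q)` (where `n_T ⊆ q ⊆ b`): there is a Zariski-dense open subset `Ω`
containing `v` on which all stabilisers (inside `q`) are conjugate under the group
`exp(q) = {exp(ad x) : x ∈ q}` to the stabiliser of `v`.  The stabiliser of such a point is
called a generic stabiliser. -/
def IsGenericStabPoint (T : Finset SR) (q : LieSubalgebra ℂ L) (v : L) : Prop :=
  ∃ Ω : Set ↥(td.negNilSub T), zOpen Ω ∧ zDense Ω ∧
    (∃ hv : v ∈ td.negNilSub T, (⟨v, hv⟩ : ↥(td.negNilSub T)) ∈ Ω) ∧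
    ∀ w ∈ Ω, ∃ x ∈ q,
      (killStab v (td.nilrad T) q).map (nilExp (LieAlgebra.ad ℂ L x)) =
        killStab (w : L) (td.nilrad T) q

/-- The saturation `exp(q)·E ⊆ n_T⁻ ≅ n_T*` of the cascade subspace `E` under the group
`exp(q)`: the coadjoint action is `exp(ad x)` followed by the projection to `n_T⁻`
along `p_T`. -/
def satSet (K : Finset (SR → ℤ)) (T : Finset SR) (q : LieSubalgebra ℂ L) :
    Set ↥(td.negNilSub T) :=
  {w | ∃ x ∈ q, ∃ u ∈ td.cascadeSub K T,
    nilExp (LieAlgebra.ad ℂ L x) u - (w : L) ∈ td.parabSub T}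

/-- The coadjoint action of `exp x` on `n_T* ≅ n_T⁻`: apply `exp(ad x)` and project
back to `n_T⁻` along `p_T`. -/
def coactOn (T : Finset SR) (x : L) (w : ↥(td.negNilSub T)) : ↥(td.negNilSub T) :=
  ⟨td.proj (td.negSet T) (nilExp (LieAlgebra.ad ℂ L x) (w : L)), td.proj_mem _ _⟩

/-- The algebra `S(n_T) = ℂ[n_T*]` of polynomial functions on `n_T* ≅ n_T⁻`. -/
def polyAlg (T : Finset SR) : Subalgebra ℂ (↥(td.negNilSub T) → ℂ) :=
  Algebra.adjoin ℂ
    (Set.range fun l : Module.Dual ℂ ↥(td.negNilSub T) => (l : ↥(td.negNilSub T) → ℂ))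

def invAlg (T : Finset SR) (q : LieSubalgebra ℂ L) : Subalgebra ℂ ↥(td.polyAlg T) where
  carrier := {F | ∀ x ∈ q, ∀ w, (F : ↥(td.negNilSub T) → ℂ) (td.coactOn T x w)
    = (F : ↥(td.negNilSub T) → ℂ) w}
  mul_mem' := by
    intro F G hF hG x hx w
    simp only [Set.mem_setOf_eq] at hF hG
    simp only [MulMemClass.coe_mul, Pi.mul_apply, hF x hx w, hG x hx w]
  add_mem' := by
    intro F G hF hG x hx w
    simp only [Set.mem_setOf_eq] at hF hG
    simp only [AddMemClass.coe_add, Pi.add_apply, hF x hx w, hG x hx w]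
  algebraMap_mem' := by
    intro c x hx w
    rfl

/-- For nested nilradicals `n_Ts ⊆ n_Tb`, the algebra of `exp(q)`-invariants in
`S(n_Ts) ⊆ S(n_Tb)`, realised inside the functions on `n_Tb⁻ ≅ n_Tb*`:
`S(n_Ts)` is generated by the linear functionals factoring through the projection onto
`n_Ts⁻`. -/
def relInv (Tb Ts : Finset SR) (q : LieSubalgebra ℂ L) :
    Subalgebra ℂ (↥(td.negNilSub Tb) → ℂ) where
  carrier := {F | F ∈ Algebra.adjoin ℂ
      {f : ↥(td.negNilSub Tb) → ℂ |
        ∃ l : Module.Dual ℂ L, f = fun w : ↥(td.negNilSub Tb) => l (td.proj (td.negSet Ts) (w : L))} ∧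
      ∀ x ∈ q, ∀ w, F (td.coactOn Tb x w) = F w}
  mul_mem' := by
    rintro F G ⟨hF1, hF2⟩ ⟨hG1, hG2⟩
    refine ⟨mul_mem hF1 hG1, fun x hx w => ?_⟩
    simp only [Pi.mul_apply, hF2 x hx w, hG2 x hx w]
  add_mem' := by
    rintro F G ⟨hF1, hF2⟩ ⟨hG1, hG2⟩
    refine ⟨add_mem hF1 hG1, fun x hx w => ?_⟩
    simp only [Pi.add_apply, hF2 x hx w, hG2 x hx w]
  algebraMap_mem' := by
    intro c
    exact ⟨Subalgebra.algebraMap_mem _ c, fun x hx w => rfl⟩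

end TriangularData

/-- The transcendence degree of a commutative `ℂ`-algebra. -/
def trdegC (A : Type*) [CommRing A] [Algebra ℂ A] : Cardinal :=
  ⨆ s : {s : Set A // AlgebraicIndependent ℂ ((↑) : s → A)}, Cardinal.mk s.1

/-- The root `ε_i − ε_{j+1} = α_i + ⋯ + α_j` of `sl_{m+1}`, in simple-root coordinates
(`0`-based indexing). -/
def intv {m : ℕ} (i j : Fin m) : Fin m → ℤ := fun a => if i ≤ a ∧ a ≤ j then 1 else 0

/-!
Root vectors normalised by `⁅E_ij, E_jl⁆ = E_il` identify `n_T` with the block strictly upper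
triangular matrices whose blocks are cut out by `T`, and the Killing form turns points of the
opposite nilradical into functionals on these matrices. A cascade point becomes a functional
supported on the antidiagonal positions `(i, n + 2 - i)`, `i ≤ k`.

If `σ(T') = T''`, consider the functionals whose values on the outer corner have nonzero leading
minors. Block Gaussian elimination conjugates such a functional under `N = exp n` until its
stabiliser contains the span of the matrix units that spans the stabiliser of a cascade point;
semicontinuity of the stabiliser dimension then gives equality on a dense open set.

If the symmetry fails at some `a`, then up to the antitranspose `a` lies in `T'` and `σ(a)` not in
`T`. Perturbing a cascade functional at one neighbouring matrix entry produces, in every nonempty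
open set, a functional whose stabiliser contains an element with a nonzero entry that no
conjugation by `N` can remove, while every element of the stabiliser of the cascade point vanishes
there.
-/

/-! ### Exponentials and logarithms of nilpotent elements -/

section NilpotentExp

open IsNilpotent (exp exp_eq_sum exp_zero exp_add_of_commute map_exp)

theorem exp_eq_one_add_add_sq_mul {A : Type*} [Ring A] [Algebra ℚ A] {z : A}
    (hz : IsNilpotent z) : ∃ r, exp z = 1 + z + z ^ 2 * r := by
  obtain ⟨N, hN⟩ := hz
  have hN' : z ^ (N + 2) = 0 := by rw [pow_add, hN, zero_mul]
  refine ⟨∑ i ∈ Finset.range N, ((i + 2).factorial : ℚ)⁻¹ • z ^ i, ?_⟩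
  rw [exp_eq_sum hN', Finset.sum_range_succ', Finset.sum_range_succ', Finset.mul_sum, add_assoc,
    add_comm]
  congr 1
  · simp [add_comm]
  · exact Finset.sum_congr rfl fun i _ => by rw [mul_smul_comm, ← pow_add, add_comm 2 i]

/-- Newton iteration: a solution of `exp x = 1 + u` modulo `u ^ (n + 1)` is improved by
subtracting the error. -/
theorem exists_pow_dvd_exp_sub_one_add {R : Type*} [CommRing R] [Algebra ℚ R] {u : R}
    (hu : IsNilpotent u) (n : ℕ) : ∃ x, u ∣ x ∧ u ^ (n + 1) ∣ exp x - (1 + u) := by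
  have nilpotent_of_dvd {y : R} (hy : u ∣ y) : IsNilpotent y := by
    obtain ⟨z, rfl⟩ := hy
    exact (Commute.all _ _).isNilpotent_mul_right hu
  induction n with
  | zero => exact ⟨0, dvd_zero _, by simp [exp_zero]⟩
  | succ n ih =>
    obtain ⟨x, hx, r, hr⟩ := ih
    have herr : u ∣ -(u ^ (n + 1) * r) :=
      (((dvd_pow_self u n.succ_ne_zero).mul_right r).neg_right)
    obtain ⟨s, hs⟩ := exp_eq_one_add_add_sq_mul (nilpotent_of_dvd herr)
    refine ⟨x + -(u ^ (n + 1) * r), dvd_add hx herr, ?_⟩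
    rw [exp_add_of_commute (Commute.all _ _) (nilpotent_of_dvd hx) (nilpotent_of_dvd herr), hs,
      eq_add_of_sub_eq hr]
    exact ⟨-r - u ^ n * r ^ 2 + u ^ n * r ^ 2 * s * (1 + u + u ^ (n + 1) * r), by ring⟩

theorem exists_exp_mul_aeval_eq_one_add {K A : Type*} [CommRing K] [Algebra ℚ K] [Ring A]
    [Algebra K A] [Algebra ℚ A] {u : A} (hu : IsNilpotent u) :
    ∃ P : Polynomial K, exp (u * Polynomial.aeval u P) = 1 + u := by
  obtain ⟨N, hN⟩ := hu
  let I : Ideal (Polynomial K) := Ideal.span {Polynomial.X ^ N}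
  let x : Polynomial K ⧸ I := Ideal.Quotient.mk I Polynomial.X
  have hx : x ^ N = 0 := by
    rw [← map_pow, Ideal.Quotient.eq_zero_iff_mem]
    exact Ideal.subset_span rfl
  let φ : Polynomial K ⧸ I →+* A :=
    Ideal.Quotient.lift I (Polynomial.aeval u : Polynomial K →ₐ[K] A).toRingHom <| by
      intro a ha
      obtain ⟨b, rfl⟩ := Ideal.mem_span_singleton.1 ha
      simp [hN]
  obtain ⟨_, ⟨z, rfl⟩, hz⟩ := exists_pow_dvd_exp_sub_one_add ⟨N, hx⟩ N
  obtain ⟨P, rfl⟩ := Ideal.Quotient.mk_surjective z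
  rw [pow_succ, hx, zero_mul, zero_dvd_iff, sub_eq_zero] at hz
  have hφx : φ x = u := (Ideal.Quotient.lift_mk _ _ _).trans (Polynomial.aeval_X u)
  have hφP : φ (Ideal.Quotient.mk I P) = Polynomial.aeval u P := Ideal.Quotient.lift_mk _ _ _
  have hφ := congrArg φ hz
  rw [map_exp ((Commute.all _ _).isNilpotent_mul_right ⟨N, hx⟩) φ, map_mul, map_add, map_one, hφx,
    hφP] at hφ
  exact ⟨P, hφ⟩

theorem exp_mulLeft_sub_mulRight_apply {K A : Type*} [CommRing K] [Algebra ℚ K] [Ring A]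
    [Algebra K A] [Algebra ℚ A] {X : A} (hX : IsNilpotent X) (Y : A) :
    exp (LinearMap.mulLeft K X - LinearMap.mulRight K X) Y = exp X * Y * exp (-X) := by
  obtain ⟨N, hN⟩ := hX
  have hN' : (-X) ^ N = 0 := by rw [neg_pow, hN, mul_zero]
  have hl : (LinearMap.mulLeft K X) ^ N = 0 := by
    rw [LinearMap.pow_mulLeft, hN, LinearMap.mulLeft_zero_eq_zero]
  have hr : (LinearMap.mulRight K (-X)) ^ N = 0 := by
    rw [LinearMap.pow_mulRight, hN', LinearMap.mulRight_zero_eq_zero]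
  have hD : LinearMap.mulLeft K X - LinearMap.mulRight K X
      = LinearMap.mulLeft K X + LinearMap.mulRight K (-X) := by
    ext z; simp [sub_eq_add_neg]
  rw [hD, exp_add_of_commute (LinearMap.commute_mulLeft_right X (-X)) ⟨N, hl⟩ ⟨N, hr⟩,
    exp_eq_sum hl, exp_eq_sum hr, exp_eq_sum hN, exp_eq_sum hN']
  simp only [LinearMap.pow_mulLeft, LinearMap.pow_mulRight, Module.End.mul_apply,
    LinearMap.sum_apply, LinearMap.smul_apply, LinearMap.mulLeft_apply, LinearMap.mulRight_apply,
    Finset.sum_mul, Finset.mul_sum, smul_mul_assoc, mul_smul_comm, mul_assoc, Finset.smul_sum]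

theorem sum_inv_factorial_smul_pow_mulLeft_sub_mulRight {K A : Type*} [Field K] [CharZero K]
    [Ring A] [Algebra K A] [Algebra ℚ A] {X Y : A} (hX : IsNilpotent X) {n : ℕ}
    (hn : ∀ i, n ≤ i → ((LinearMap.mulLeft K X - LinearMap.mulRight K X) ^ i) Y = 0) :
    ∑ i ∈ Finset.range n, (i.factorial : K)⁻¹ •
      ((LinearMap.mulLeft K X - LinearMap.mulRight K X) ^ i) Y = exp X * Y * exp (-X) := by
  have hD : IsNilpotent (LinearMap.mulLeft K X - LinearMap.mulRight K X) :=
    (LinearMap.commute_mulLeft_right X X).isNilpotent_sub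
      ((LinearMap.isNilpotent_mulLeft_iff K X).2 hX) ((LinearMap.isNilpotent_mulRight_iff K X).2 hX)
  obtain ⟨N, hN⟩ := hD
  have hN' : (LinearMap.mulLeft K X - LinearMap.mulRight K X) ^ (N + n) = 0 := by
    rw [pow_add, hN, zero_mul]
  rw [← exp_mulLeft_sub_mulRight_apply (K := K) hX, exp_eq_sum hN', LinearMap.sum_apply]
  simp only [LinearMap.smul_apply, inv_natCast_smul_eq K ℚ]
  refine Finset.sum_subset (Finset.range_mono (Nat.le_add_left n N)) fun i _ hi => ?_
  rw [hn i (by simpa using hi), smul_zero]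

end NilpotentExp

/-! ### The matrix model of the nilradical -/

section MatrixModel

open IsNilpotent (exp)

open Matrix (single)

/-- Square matrices of size `m + 1`: the space in which the nilradicals of type `A_m` are realised,
the root `ε_i - ε_j` corresponding to the matrix unit at `(i, j)`. -/
abbrev Mat (m : ℕ) := Matrix (Fin (m + 1)) (Fin (m + 1)) ℂ

/-- Some `a ∈ T` satisfies `i ≤ a < j`, that is, the simple root `ε_a - ε_{a+1}` occurs in the root
`ε_i - ε_j`; these are the roots of the nilradical attached to `T`. -/
def Separates {m : ℕ} (T : Finset (Fin m)) (i j : Fin (m + 1)) : Prop :=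
  ∃ a ∈ T, (i : ℕ) ≤ a ∧ (a : ℕ) < j

variable {m : ℕ} {T : Finset (Fin m)}

theorem Separates.lt {i j : Fin (m + 1)} (h : Separates T i j) : i < j := by
  obtain ⟨a, -, hi, hj⟩ := h
  exact hi.trans_lt hj

theorem Separates.mono {i j i' j' : Fin (m + 1)} (h : Separates T i j) (hi : i' ≤ i)
    (hj : j ≤ j') : Separates T i' j' := by
  obtain ⟨a, ha, hia, haj⟩ := h
  exact ⟨a, ha, le_trans hi hia, haj.trans_le hj⟩

/-- The nilradical `n_T` as an algebra of block strictly upper triangular matrices. -/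
def nilMatrices (T : Finset (Fin m)) : NonUnitalSubalgebra ℂ (Mat m) where
  carrier := {X | ∀ i j, ¬Separates T i j → X i j = 0}
  add_mem' hX hY i j h := by rw [Matrix.add_apply, hX i j h, hY i j h, add_zero]
  zero_mem' _ _ _ := rfl
  smul_mem' c X hX i j h := by rw [Matrix.smul_apply, hX i j h, smul_zero]
  mul_mem' {X Y} hX hY i j h := by
    rw [Matrix.mul_apply]
    refine Finset.sum_eq_zero fun l _ => ?_
    by_cases hil : Separates T i l
    · rw [hY l j fun hlj => h (hil.mono le_rfl hlj.lt.le), mul_zero]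
    · rw [hX i l hil, zero_mul]

theorem nilMatrices_mono {T' : Finset (Fin m)} (h : T ⊆ T') : nilMatrices T ≤ nilMatrices T' :=
  fun _ hX i j hs => hX i j fun ⟨a, ha, haij⟩ => hs ⟨a, h ha, haij⟩

theorem single_mem_nilMatrices {i j : Fin (m + 1)} (h : Separates T i j) (c : ℂ) :
    single i j c ∈ nilMatrices T := by
  intro p q hpq
  rw [Matrix.single_apply, if_neg]
  rintro ⟨rfl, rfl⟩
  exact hpq h

theorem pow_apply_eq_zero_of_mem_nilMatrices {X : Mat m} (hX : X ∈ nilMatrices T) (r : ℕ)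
    {i j : Fin (m + 1)} (hij : (j : ℕ) < i + r) : (X ^ r) i j = 0 := by
  induction r generalizing j with
  | zero => rw [pow_zero, Matrix.one_apply_ne (by rintro rfl; omega)]
  | succ r ih =>
    rw [pow_succ, Matrix.mul_apply]
    refine Finset.sum_eq_zero fun l _ => ?_
    by_cases hlj : Separates T l j
    · rw [ih (by have := hlj.lt; omega), zero_mul]
    · rw [hX _ _ hlj, mul_zero]

theorem pow_eq_zero_of_mem_nilMatrices {X : Mat m} (hX : X ∈ nilMatrices T) :
    X ^ (m + 1) = 0 := by
  ext i j
  exact pow_apply_eq_zero_of_mem_nilMatrices hX _ (by omega)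

theorem isNilpotent_of_mem_nilMatrices {X : Mat m} (hX : X ∈ nilMatrices T) : IsNilpotent X :=
  ⟨_, pow_eq_zero_of_mem_nilMatrices hX⟩

theorem pow_succ_mem_nilMatrices {X : Mat m} (hX : X ∈ nilMatrices T) (r : ℕ) :
    X ^ (r + 1) ∈ nilMatrices T := by
  induction r with
  | zero => rwa [zero_add, pow_one]
  | succ r ih => rw [pow_succ]; exact mul_mem ih hX

theorem exp_sub_one_mem_nilMatrices {X : Mat m} (hX : X ∈ nilMatrices T) :
    exp X - 1 ∈ nilMatrices T := by
  rw [IsNilpotent.exp_eq_sum (pow_eq_zero_of_mem_nilMatrices hX), Finset.sum_range_succ',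
    pow_zero, Nat.factorial_zero, Nat.cast_one, inv_one, one_smul, add_sub_cancel_right]
  refine sum_mem fun i _ p q hpq => ?_
  rw [Matrix.smul_apply, pow_succ_mem_nilMatrices hX i p q hpq, smul_zero]

theorem exists_exp_eq_of_sub_one_mem_nilMatrices {U : Mat m} (hU : U - 1 ∈ nilMatrices T) :
    ∃ X ∈ nilMatrices T, exp X = U := by
  obtain ⟨P, hP⟩ :=
    exists_exp_mul_aeval_eq_one_add (K := ℂ) (isNilpotent_of_mem_nilMatrices hU)
  refine ⟨_, ?_, hP.trans (add_sub_cancel 1 U)⟩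
  rw [Polynomial.aeval_eq_sum_range, Finset.mul_sum]
  refine sum_mem fun i _ => ?_
  rw [mul_smul_comm, ← pow_succ']
  exact SMulMemClass.smul_mem _ (pow_succ_mem_nilMatrices hU i)

theorem mul_sub_one_mem_nilMatrices {U V : Mat m} (hU : U - 1 ∈ nilMatrices T)
    (hV : V - 1 ∈ nilMatrices T) : U * V - 1 ∈ nilMatrices T := by
  have h : U * V - 1 = (U - 1) * (V - 1) + (U - 1) + (V - 1) := by noncomm_ring
  rw [h]
  exact add_mem (add_mem (mul_mem hU hV) hU) hV

theorem mul_mul_mem_nilMatrices {U V X : Mat m} (hU : U - 1 ∈ nilMatrices T)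
    (hV : V - 1 ∈ nilMatrices T) (hX : X ∈ nilMatrices T) : U * X * V ∈ nilMatrices T := by
  have h : U * X * V = (U - 1) * X * (V - 1) + (U - 1) * X + X * (V - 1) + X := by noncomm_ring
  rw [h]
  exact add_mem (add_mem (add_mem (mul_mem (mul_mem hU hX) hV) (mul_mem hU hX)) (mul_mem hX hV)) hX

theorem apply_eq_zero_of_sub_one_mem_nilMatrices {U : Mat m} (hU : U - 1 ∈ nilMatrices T)
    {p q : Fin (m + 1)} (hpq : p ≠ q) (hs : ¬Separates T p q) : U p q = 0 := by
  have h := hU p q hs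
  rwa [Matrix.sub_apply, Matrix.one_apply_ne hpq, sub_zero] at h

theorem apply_self_of_sub_one_mem_nilMatrices {U : Mat m} (hU : U - 1 ∈ nilMatrices T)
    (p : Fin (m + 1)) : U p p = 1 := by
  rw [← sub_eq_zero, ← Matrix.one_apply_eq p, ← Matrix.sub_apply, hU p p fun h => h.lt.false]

theorem mul_mul_apply_of_sub_one_mem_nilMatrices {U V X : Mat m} (hU : U - 1 ∈ nilMatrices T)
    (hV : V - 1 ∈ nilMatrices T) {p q : Fin (m + 1)}
    (hrow : ∀ i j, i ≠ p → Separates T p i → (Separates T j q ∨ j = q) → X i j = 0)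
    (hcol : ∀ j, j ≠ q → Separates T j q → X p j = 0) : (U * X * V) p q = X p q := by
  have hUX (j) (hj : Separates T j q ∨ j = q) : (U * X) p j = X p j := by
    rw [Matrix.mul_apply, Finset.sum_eq_single_of_mem p (Finset.mem_univ p),
      apply_self_of_sub_one_mem_nilMatrices hU, one_mul]
    intro i _ hi
    by_cases hs : Separates T p i
    · rw [hrow i j hi hs hj, mul_zero]
    · rw [apply_eq_zero_of_sub_one_mem_nilMatrices hU hi.symm hs, zero_mul]
  rw [Matrix.mul_apply, Finset.sum_eq_single_of_mem q (Finset.mem_univ q),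
    apply_self_of_sub_one_mem_nilMatrices hV, mul_one, hUX q (Or.inr rfl)]
  intro j _ hj
  by_cases hs : Separates T j q
  · rw [hUX j (Or.inl hs), hcol j hj hs, zero_mul]
  · rw [apply_eq_zero_of_sub_one_mem_nilMatrices hV hj hs, mul_zero]

/-! ### Linear functionals on matrices -/

section Functional

variable (f : Mat m →ₗ[ℂ] ℂ)

theorem map_eq_sum_mul_map_single (X : Mat m) : f X = ∑ i, ∑ j, X i j * f (single i j 1) := by
  conv_lhs => rw [Matrix.matrix_eq_sum_single X]
  simp only [map_sum]
  refine Finset.sum_congr rfl fun i _ => Finset.sum_congr rfl fun j _ => ?_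
  rw [← smul_eq_mul, ← map_smul, Matrix.smul_single, smul_eq_mul, mul_one]

theorem map_mul_eq_zero {X Y : Mat m}
    (h : ∀ i j l, X i j ≠ 0 → Y j l ≠ 0 → f (single i l 1) = 0) : f (X * Y) = 0 := by
  rw [map_eq_sum_mul_map_single]
  refine Finset.sum_eq_zero fun i _ => Finset.sum_eq_zero fun l _ => ?_
  rw [Matrix.mul_apply, Finset.sum_mul]
  refine Finset.sum_eq_zero fun j _ => ?_
  by_cases hX : X i j = 0
  · rw [hX, zero_mul, zero_mul]
  by_cases hY : Y j l = 0
  · rw [hY, mul_zero, zero_mul]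
  rw [h i j l hX hY, mul_zero]

theorem map_mul_single_mul (X Y : Mat m) (p q : Fin (m + 1)) :
    f (X * single p q 1 * Y) = ∑ i, ∑ j, X i p * f (single i j 1) * Y q j := by
  rw [map_eq_sum_mul_map_single]
  refine Finset.sum_congr rfl fun i _ => Finset.sum_congr rfl fun j _ => ?_
  rw [Matrix.mul_apply, Finset.sum_eq_single_of_mem q (Finset.mem_univ q),
    Matrix.mul_single_apply_same, mul_one, mul_right_comm]
  intro b _ hb
  rw [Matrix.mul_single_apply_of_ne _ _ _ _ _ hb, zero_mul]

variable {f}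

theorem map_mul_single_eq {X : Mat m} (hX : X ∈ nilMatrices T) (p : Fin (m + 1))
    {q r : Fin (m + 1)} (h : ∀ i, i ≠ p → Separates T i q → f (single i r 1) = 0) :
    f (X * single q r 1) = X p q * f (single p r 1) := by
  rw [← mul_one (X * _), map_mul_single_mul, Finset.sum_eq_single_of_mem p (Finset.mem_univ p)]
  · simp [Matrix.one_apply]
  · intro i _ hi
    refine Finset.sum_eq_zero fun j _ => ?_
    rcases eq_or_ne r j with rfl | hj
    · by_cases hs : Separates T i q
      · rw [h i hi hs, mul_zero, zero_mul]
      · rw [hX i q hs, zero_mul, zero_mul]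
    · rw [Matrix.one_apply_ne hj, mul_zero]

end Functional

end MatrixModel

/-! ### Cascade functionals -/

section CascadeFunctional

open Matrix (single)

variable {m : ℕ} {T : Finset (Fin m)} {k : ℕ} {f : Mat m →ₗ[ℂ] ℂ}

/-- The stabiliser of `f`, restricted to `n_T`, for the coadjoint representation of `n_T` in its
matrix model. -/
def coadjointStab (T : Finset (Fin m)) (f : Mat m →ₗ[ℂ] ℂ) : Set (Mat m) :=
  {X | X ∈ nilMatrices T ∧ ∀ Y ∈ nilMatrices T, f (X * Y - Y * X) = 0}

/-- The matrix model of a cascade point: among the positions of `n_T`, the functional is supported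
on the first `k` antidiagonal ones, and it does not vanish there. -/
structure IsCascadeFunctional (T : Finset (Fin m)) (k : ℕ) (f : Mat m →ₗ[ℂ] ℂ) : Prop where
  map_single_eq_zero : ∀ i j, Separates T i j → ¬(j = i.rev ∧ (i : ℕ) < k) → f (single i j 1) = 0
  map_single_rev_ne_zero : ∀ i : Fin (m + 1), (i : ℕ) < k → f (single i i.rev 1) ≠ 0

/-- Reflection in the antidiagonal: the anti-automorphism of the matrix algebra that induces the
symmetry of the Dynkin diagram. -/
def antitranspose : Mat m ≃ₗ[ℂ] Mat m :=
  (Matrix.transposeLinearEquiv _ _ ℂ ℂ).trans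
    (Matrix.reindexLinearEquiv ℂ ℂ Fin.revPerm Fin.revPerm)

theorem antitranspose_apply (X : Mat m) (i j : Fin (m + 1)) :
    antitranspose X i j = X j.rev i.rev :=
  rfl

theorem antitranspose_antitranspose (X : Mat m) : antitranspose (antitranspose X) = X := by
  ext i j
  rw [antitranspose_apply, antitranspose_apply, Fin.rev_rev, Fin.rev_rev]

theorem antitranspose_one : antitranspose (1 : Mat m) = 1 := by
  ext i j
  simp only [antitranspose_apply, Matrix.one_apply, Fin.rev_inj, eq_comm]

theorem antitranspose_mul (X Y : Mat m) :
    antitranspose (X * Y) = antitranspose Y * antitranspose X := by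
  ext i j
  rw [antitranspose_apply, Matrix.mul_apply, Matrix.mul_apply, ← Equiv.sum_comp Fin.revPerm]
  exact Finset.sum_congr rfl fun l _ => mul_comm _ _

theorem antitranspose_single (i j : Fin (m + 1)) (c : ℂ) :
    antitranspose (single i j c) = single j.rev i.rev c := by
  ext p q
  simp only [antitranspose_apply, Matrix.single_apply, Fin.rev_eq_iff, and_comm]

theorem separates_image_rev {i j : Fin (m + 1)} :
    Separates (T.image Fin.rev) i j ↔ Separates T j.rev i.rev := by
  simp only [Separates, Finset.exists_mem_image, Fin.val_rev]
  exact exists_congr fun a => and_congr_right fun _ => by omega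

theorem antitranspose_mem_nilMatrices {X : Mat m} (hX : X ∈ nilMatrices T) :
    antitranspose X ∈ nilMatrices (T.image Fin.rev) := fun _ _ h =>
  hX _ _ (separates_image_rev.not.1 h)

theorem image_rev_image_rev (T : Finset (Fin m)) : (T.image Fin.rev).image Fin.rev = T := by
  rw [Finset.image_image, Fin.rev_involutive.comp_self, Finset.image_id]

theorem antitranspose_mem_coadjointStab {X : Mat m} (hX : X ∈ coadjointStab T f) :
    antitranspose X ∈ coadjointStab (T.image Fin.rev) (f ∘ₗ antitranspose.toLinearMap) := by
  refine ⟨antitranspose_mem_nilMatrices hX.1, fun Y hY => ?_⟩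
  have hY' := antitranspose_mem_nilMatrices hY
  rw [image_rev_image_rev] at hY'
  have h := hX.2 _ hY'
  rw [← neg_sub, map_neg, neg_eq_zero] at h
  simpa only [LinearMap.comp_apply, LinearEquiv.coe_coe, map_sub, antitranspose_mul,
    antitranspose_antitranspose] using h

namespace IsCascadeFunctional

theorem comp_antitranspose (hf : IsCascadeFunctional T k f) :
    IsCascadeFunctional (T.image Fin.rev) k (f ∘ₗ antitranspose.toLinearMap) where
  map_single_eq_zero i j hij h := by
    rw [LinearMap.comp_apply, LinearEquiv.coe_coe, antitranspose_single]
    refine hf.map_single_eq_zero _ _ (separates_image_rev.1 hij) fun h' => h ?_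
    rw [Fin.rev_rev] at h'
    exact ⟨h'.1.symm, by simpa only [← h'.1, Fin.rev_rev] using h'.2⟩
  map_single_rev_ne_zero i hi := by
    rw [LinearMap.comp_apply, LinearEquiv.coe_coe, antitranspose_single, Fin.rev_rev]
    exact hf.map_single_rev_ne_zero i hi

theorem apply_eq_zero_of_separates_rev (hf : IsCascadeFunctional T k f) {X : Mat m}
    (hX : X ∈ coadjointStab T f) {p q : Fin (m + 1)} (hp : (p : ℕ) < k)
    (hs : Separates T q p.rev) : X p q = 0 := by
  by_cases hpq : Separates T p q
  · have h := hX.2 _ (single_mem_nilMatrices hs 1)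
    rw [map_sub, map_mul_single_eq hX.1 p, map_mul_eq_zero, sub_zero, mul_eq_zero] at h
    · exact h.resolve_right (hf.map_single_rev_ne_zero p hp)
    · intro i j l hij hjl
      obtain ⟨rfl, rfl⟩ : q = i ∧ p.rev = j := by
        by_contra hne
        exact hij (Matrix.single_apply_of_ne _ _ _ _ _ hne)
      have hl : Separates T p.rev l := not_imp_comm.1 (hX.1 _ _) hjl
      refine hf.map_single_eq_zero _ _ (hs.mono le_rfl hl.lt.le) fun hlq => ?_
      have h1 := Fin.rev_lt_rev.2 hl.lt
      rw [hlq.1, Fin.rev_rev, Fin.rev_rev] at h1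
      exact h1.asymm hpq.lt
    · intro i hi hiq
      refine hf.map_single_eq_zero _ _ (hs.mono hiq.lt.le le_rfl) fun h => hi ?_
      exact (Fin.rev_injective h.1).symm
  · exact hX.1 _ _ hpq

theorem apply_eq_zero_of_rev_separates (hf : IsCascadeFunctional T k f) {X : Mat m}
    (hX : X ∈ coadjointStab T f) {p q : Fin (m + 1)} (hq : (q.rev : ℕ) < k)
    (hs : Separates T q.rev p) : X p q = 0 := by
  have h := hf.comp_antitranspose.apply_eq_zero_of_separates_rev
    (antitranspose_mem_coadjointStab hX) (p := q.rev) (q := p.rev) hq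
    (separates_image_rev.2 (by rwa [Fin.rev_rev, Fin.rev_rev]))
  rwa [antitranspose_apply, Fin.rev_rev, Fin.rev_rev] at h

end IsCascadeFunctional

/-- What the hypothesis `K(n_T) = {β₁, …, β_k}` says about `T`. -/
structure IsCascadeShape (T : Finset (Fin m)) (k : ℕ) : Prop where
  two_mul_le : 2 * k ≤ m + 1
  outer : ∀ a ∈ T, (a : ℕ) + 1 ≤ k ∨ m ≤ (a : ℕ) + k
  inner : ∃ a ∈ T, k ≤ (a : ℕ) + 1 ∧ (a : ℕ) + k ≤ m

/-- The condition `σ(T') = T''`, as stability of `T' ∪ T''` under `σ`. -/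
def IsOuterSymmetric (T : Finset (Fin m)) (k : ℕ) : Prop :=
  ∀ a ∈ T, (a : ℕ) + 2 ≤ k ∨ m + 1 ≤ (a : ℕ) + k → a.rev ∈ T

/-- The positions weakly above and to the right of every inner element of `T`. -/
def IsInnerCorner (T : Finset (Fin m)) (k : ℕ) (p q : Fin (m + 1)) : Prop :=
  (∀ a ∈ T, k ≤ (a : ℕ) + 1 → (p : ℕ) ≤ a) ∧ ∀ a ∈ T, (a : ℕ) + k ≤ m → (a : ℕ) < q

/-- The indices `p` and `q.rev` lie in the same block with respect to `T'`. -/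
def SameOuterBlock (T : Finset (Fin m)) (k : ℕ) (p q : Fin (m + 1)) : Prop :=
  ∀ a ∈ T, (a : ℕ) + 2 ≤ k → ((p : ℕ) ≤ a ↔ (q.rev : ℕ) ≤ a)

theorem IsCascadeShape.separates {p q : Fin (m + 1)} (hT : IsCascadeShape T k)
    (h : IsInnerCorner T k p q) : Separates T p q :=
  let ⟨a, ha, h₁, h₂⟩ := hT.inner
  ⟨a, ha, h.1 a ha h₁, h.2 a ha h₂⟩

/-- The positions that span the generic stabiliser when `σ(T') = T''`. -/
def IsStabPosition (T : Finset (Fin m)) (k : ℕ) (p q : Fin (m + 1)) : Prop :=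
  IsInnerCorner T k p q ∧ SameOuterBlock T k p q

theorem IsCascadeFunctional.apply_eq_zero (hf : IsCascadeFunctional T k f)
    (hT : IsCascadeShape T k) (hsym : IsOuterSymmetric T k) {X : Mat m}
    (hX : X ∈ coadjointStab T f) {p q : Fin (m + 1)} (hpq : ¬IsStabPosition T k p q) :
    X p q = 0 := by
  by_cases hs : Separates T p q
  swap
  · exact hX.1 p q hs
  have above (h : (p : ℕ) < k) (a : Fin m) (ha : a ∈ T) (hqa : (q : ℕ) ≤ a)
      (hap : (a : ℕ) < p.rev) : X p q = 0 :=
    hf.apply_eq_zero_of_separates_rev hX h ⟨a, ha, hqa, hap⟩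
  have below (h : (q.rev : ℕ) < k) (a : Fin m) (ha : a ∈ T) (hqa : (q.rev : ℕ) ≤ a)
      (hap : (a : ℕ) < p) : X p q = 0 :=
    hf.apply_eq_zero_of_rev_separates hX h ⟨a, ha, hqa, hap⟩
  obtain ⟨b, hb, hpb, hbq⟩ := hs
  have hb' := hT.outer b hb
  simp only [IsStabPosition, IsInnerCorner, SameOuterBlock, not_and_or, not_forall,
    exists_prop] at hpq
  simp only [Fin.val_rev] at hpq above below
  obtain (⟨a, ha, hka, hap⟩ | ⟨a, ha, hak, haq⟩) | ⟨a, ha, hak, hblock⟩ := hpq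
  · exact below (by omega) a ha (by omega) (by omega)
  · exact above (by omega) a ha (by omega) (by omega)
  · by_cases hpa : (p : ℕ) ≤ a
    · refine above (by omega) a.rev (hsym a ha (Or.inl hak)) ?_ ?_ <;> rw [Fin.val_rev] <;> omega
    · exact below (by omega) a ha (by omega) (by omega)

theorem IsStabPosition.not_of_separates_right (hsym : IsOuterSymmetric T k) {p q j : Fin (m + 1)}
    (hpq : IsStabPosition T k p q) (hqj : Separates T q j) :
    IsInnerCorner T k p j ∧ ¬SameOuterBlock T k p j := by
  refine ⟨⟨hpq.1.1, fun a ha h => (hpq.1.2 a ha h).trans hqj.lt⟩, fun hpj => ?_⟩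
  obtain ⟨b, hb, hqb, hbj⟩ := hqj
  have hbk : m + 1 ≤ (b : ℕ) + k := by
    by_contra h
    exact (hpq.1.2 b hb (by omega)).not_ge hqb
  have hb₂ : (b.rev : ℕ) + 2 ≤ k := by rw [Fin.val_rev]; omega
  have h₁ := hpq.2 _ (hsym b hb (Or.inr hbk)) hb₂
  have h₂ := hpj _ (hsym b hb (Or.inr hbk)) hb₂
  simp only [Fin.val_rev] at h₁ h₂
  omega

theorem IsStabPosition.not_of_separates_left {p q j : Fin (m + 1)}
    (hpq : IsStabPosition T k p q) (hjp : Separates T j p) :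
    IsInnerCorner T k j q ∧ ¬SameOuterBlock T k j q := by
  refine ⟨⟨fun a ha h => le_trans hjp.lt.le (hpq.1.1 a ha h), hpq.1.2⟩, fun hjq => ?_⟩
  obtain ⟨b, hb, hjb, hbp⟩ := hjp
  have hbk : (b : ℕ) + 2 ≤ k := by
    by_contra h
    exact (hpq.1.1 b hb (by omega)).not_gt hbp
  have h₁ := hpq.2 b hb hbk
  have h₂ := hjq b hb hbk
  omega

theorem mem_coadjointStab_of_isStabPosition (hT : IsCascadeShape T k)
    (hsym : IsOuterSymmetric T k)
    (hf : ∀ p q, IsInnerCorner T k p q → ¬SameOuterBlock T k p q → f (single p q 1) = 0)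
    {X : Mat m} (hX : ∀ p q, ¬IsStabPosition T k p q → X p q = 0) : X ∈ coadjointStab T f := by
  have hpos (p q) (h : X p q ≠ 0) : IsStabPosition T k p q := not_imp_comm.1 (hX p q) h
  refine ⟨fun p q h => hX p q fun hpq => h (hT.separates hpq.1), fun Y hY => ?_⟩
  have hsep (p q) (h : Y p q ≠ 0) : Separates T p q := not_imp_comm.1 (hY p q) h
  rw [map_sub, map_mul_eq_zero f fun p q j hpq hqj => ?right,
    map_mul_eq_zero f fun j p q hjp hpq => ?left, sub_zero]
  case right =>
    have h := (hpos p q hpq).not_of_separates_right hsym (hsep q j hqj)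
    exact hf p j h.1 h.2
  case left =>
    have h := (hpos p q hpq).not_of_separates_left (hsep j p hjp)
    exact hf j q h.1 h.2

end CascadeFunctional

/-! ### Block diagonalisation of a functional -/

section BlockElimination

open scoped Matrix

variable {ι K : Type*} [Fintype ι] [LinearOrder ι] [Field K]

theorem exists_row_add_vecMul_eq_zero {G : Matrix ι ι K} {S : Set ι}
    (hS : ∀ a ∈ S, (G.toSquareBlockProp (· ≤ a)).det ≠ 0) (p : ι) :
    ∃ l : ι → K, (∀ i, l i ≠ 0 → ∃ a ∈ S, i ≤ a ∧ a < p) ∧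
      ∀ r, (∃ a ∈ S, r ≤ a ∧ a < p) → G p r + (l ᵥ* G) r = 0 := by
  by_cases hp : (S ∩ Set.Iio p).Nonempty
  swap
  · exact ⟨0, fun i hi => absurd rfl hi, fun r ⟨a, ha, _, hap⟩ => absurd ⟨a, ha, hap⟩ hp⟩
  obtain ⟨a, ⟨haS, hap⟩, hmax⟩ := (Set.toFinite (S ∩ Set.Iio p)).exists_maximal hp
  let A := G.toSquareBlockProp (· ≤ a)
  let x : {i // i ≤ a} → K := (fun i : {i // i ≤ a} => -G p i) ᵥ* A⁻¹
  have hx : x ᵥ* A = fun i : {i // i ≤ a} => -G p i := by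
    rw [Matrix.vecMul_vecMul, Matrix.nonsing_inv_mul _ (isUnit_iff_ne_zero.2 (hS a haS)),
      Matrix.vecMul_one]
  refine ⟨Function.extend Subtype.val x 0, fun i hi => ⟨a, haS, ?_, hap⟩, ?_⟩
  · by_contra hia
    exact hi (Function.extend_apply' _ _ _ fun ⟨b, hb⟩ => hia (hb ▸ b.2))
  · rintro r ⟨b, hb, hrb, hbp⟩
    have hra : r ≤ a := hrb.trans (le_of_not_gt fun h => h.not_ge (hmax ⟨hb, hbp⟩ h.le))
    have hsum : ∑ i, x i * A i ⟨r, hra⟩ = ∑ i, Function.extend Subtype.val x 0 i * G i r := by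
      refine Fintype.sum_of_injective _ Subtype.val_injective _ _ (fun i hi => ?_) fun i => ?_
      · rw [Function.extend_apply' _ _ _ hi, Pi.zero_apply, zero_mul]
      · rw [Subtype.val_injective.extend_apply]
        rfl
    exact (add_comm _ _).trans
      (eq_neg_iff_add_eq_zero.1 (hsum.symm.trans (congrFun hx ⟨r, hra⟩)))

theorem exists_one_add_mul_mul_apply_eq_zero {G : Matrix ι ι K} {S : Set ι}
    (hS : ∀ a ∈ S, (G.toSquareBlockProp (· ≤ a)).det ≠ 0) :
    ∃ l u : Matrix ι ι K, (∀ p i, l p i ≠ 0 → ∃ a ∈ S, i ≤ a ∧ a < p) ∧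
      (∀ p i, u p i ≠ 0 → ∃ a ∈ S, i ≤ a ∧ a < p) ∧
      ∀ p r, (∃ a ∈ S, ¬(p ≤ a ↔ r ≤ a)) → ((1 + l) * G * (1 + u)ᵀ : Matrix ι ι K) p r = 0 := by
  have hS' : ∀ a ∈ S, (Gᵀ.toSquareBlockProp (· ≤ a)).det ≠ 0 := fun a ha => by
    rw [← Matrix.det_transpose]
    exact hS a ha
  choose l hl hlG using exists_row_add_vecMul_eq_zero hS
  choose u hu huG using exists_row_add_vecMul_eq_zero hS'
  have lower (c : ι → ι → K) (hc : ∀ p i, c p i ≠ 0 → ∃ a ∈ S, i ≤ a ∧ a < p) {p i : ι}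
      (hip : p < i) : (1 + Matrix.of c) p i = 0 := by
    rw [Matrix.add_apply, Matrix.one_apply_ne hip.ne, zero_add]
    by_contra h
    obtain ⟨a, -, hia, hap⟩ := hc p i h
    exact (hia.trans_lt hap).asymm hip
  have hLG (p r a) (ha : a ∈ S) (hra : r ≤ a) (hap : a < p) :
      ((1 + Matrix.of l) * G : Matrix ι ι K) p r = 0 := by
    rw [add_mul, one_mul]
    exact hlG p r ⟨a, ha, hra, hap⟩
  have hGU (p r a) (ha : a ∈ S) (hpa : p ≤ a) (har : a < r) :
      (G * (1 + Matrix.of u)ᵀ : Matrix ι ι K) p r = 0 := by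
    rw [← Matrix.transpose_apply (G * _), Matrix.transpose_mul, Matrix.transpose_transpose,
      add_mul, one_mul]
    exact huG r p ⟨a, ha, hpa, har⟩
  refine ⟨Matrix.of l, Matrix.of u, hl, hu, fun p r ⟨a, ha, hpr⟩ => ?_⟩
  by_cases hpa : p ≤ a
  · have har : a < r := not_le.1 fun hra => hpr (iff_of_true hpa hra)
    rw [mul_assoc, Matrix.mul_apply]
    refine Finset.sum_eq_zero fun i _ => ?_
    rcases le_or_gt i p with hip | hip
    · rw [hGU i r a ha (hip.trans hpa) har, mul_zero]
    · rw [lower l hl hip, zero_mul]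
  · have hra : r ≤ a := not_not.1 fun hra => hpr (iff_of_false hpa hra)
    rw [Matrix.mul_apply]
    refine Finset.sum_eq_zero fun i _ => ?_
    rcases le_or_gt i r with hir | hir
    · rw [hLG p i a ha (hir.trans hra) (not_le.1 hpa), zero_mul]
    · rw [Matrix.transpose_apply, lower u hu hir, mul_zero]

end BlockElimination

section FunctionalNormalForm

open scoped Matrix

open IsNilpotent (exp exp_mul_exp_neg_self exp_neg_mul_exp_self)

open Matrix (single)

variable {m : ℕ} {T : Finset (Fin m)} {k : ℕ}

theorem matrix_mul_eq_zero {ι κ l R : Type*} [Fintype κ] [NonUnitalNonAssocSemiring R]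
    {A : Matrix ι κ R} {B : Matrix κ l R} (h : ∀ i j, A i j ≠ 0 → B j = 0) : A * B = 0 := by
  ext i r
  rw [Matrix.mul_apply]
  refine Finset.sum_eq_zero fun j _ => ?_
  by_cases hA : A i j = 0
  · rw [hA, zero_mul]
  · rw [h i j hA, Pi.zero_apply, mul_zero]

theorem exists_exp_mul_mul_exp_neg_eq {Λ M : Mat m} (hΛ : Λ ∈ nilMatrices T)
    (hM : M ∈ nilMatrices T) (hMΛ : M * Λ = 0) :
    ∃ X ∈ nilMatrices T, ∀ E, M * E = 0 → E * Λ = 0 →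
      exp X * E * exp (-X) = (1 + Λ) * E * (1 + M) := by
  have inverse {A : Mat m} (hA : A ∈ nilMatrices T) :
      ∃ B : Mat m, B - 1 ∈ nilMatrices T ∧ (1 + A) * B = 1 ∧ B * (1 + A) = 1 := by
    obtain ⟨Y, hY, hYA⟩ := exists_exp_eq_of_sub_one_mem_nilMatrices (U := 1 + A)
      (by rwa [add_sub_cancel_left])
    have hnil := isNilpotent_of_mem_nilMatrices hY
    refine ⟨exp (-Y), exp_sub_one_mem_nilMatrices (neg_mem hY), ?_, ?_⟩ <;> rw [← hYA]
    exacts [exp_mul_exp_neg_self hnil, exp_neg_mul_exp_self hnil]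
  obtain ⟨V, hV, -, hVM⟩ := inverse hM
  obtain ⟨W, -, hΛW, -⟩ := inverse hΛ
  obtain ⟨X, hX, hXU⟩ := exists_exp_eq_of_sub_one_mem_nilMatrices (U := (1 + Λ) * V)
    (mul_sub_one_mem_nilMatrices (by rwa [add_sub_cancel_left]) hV)
  have hneg : exp (-X) = (1 + M) * W := by
    refine left_inv_eq_right_inv
      (exp_neg_mul_exp_self (isNilpotent_of_mem_nilMatrices hX)) ?_
    rw [hXU, mul_assoc, ← mul_assoc V, hVM, one_mul, hΛW]
  refine ⟨X, hX, fun E hME hEΛ => ?_⟩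
  have hVE : V * E = E := by
    nth_rw 1 [← add_zero E, ← hME, ← one_add_mul M E, ← mul_assoc, hVM, one_mul]
  have hEW : E * (1 + M) * W = E * (1 + M) := by
    have h : E * (1 + M) * (1 + Λ) = E * (1 + M) := by
      rw [mul_one_add, mul_assoc, one_add_mul, hMΛ, add_zero, hEΛ, add_zero]
    rw [← h, mul_assoc _ (1 + Λ), hΛW, mul_one, h]
  rw [hXU, hneg, mul_assoc _ V, hVE, mul_assoc, ← mul_assoc E, hEW, mul_assoc]

/-- The values of `f` on matrix units, the columns being taken in reverse order so that the
antidiagonal positions become diagonal. -/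
def valueMatrix (f : Mat m →ₗ[ℂ] ℂ) : Mat m := Matrix.of fun i j => f (single i j.rev 1)

theorem map_mul_single_mul_eq_valueMatrix (f : Mat m →ₗ[ℂ] ℂ) (A B : Mat m)
    (p q : Fin (m + 1)) :
    f (A * single p q 1 * B) = (Aᵀ * valueMatrix f * antitranspose B) p q.rev := by
  rw [map_mul_single_mul, Finset.sum_comm, Matrix.mul_apply, ← Equiv.sum_comp Fin.revPerm]
  refine Finset.sum_congr rfl fun j _ => ?_
  rw [Matrix.mul_apply, Finset.sum_mul]
  refine Finset.sum_congr rfl fun i _ => ?_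
  rw [Matrix.transpose_apply, valueMatrix, Matrix.of_apply, antitranspose_apply, Fin.rev_rev,
    Fin.revPerm_apply]

theorem exists_one_add_transpose_mul_mul_apply_eq_zero {G : Mat m}
    (hG : ∀ a ∈ T, (G.toSquareBlockProp (· ≤ a.castSucc)).det ≠ 0) :
    ∃ Λ ∈ nilMatrices T, ∃ Υ ∈ nilMatrices T, ∀ p r : Fin (m + 1),
      (∃ a ∈ T, ¬((p : ℕ) ≤ a ↔ (r : ℕ) ≤ a)) → ((1 + Λ)ᵀ * G * (1 + Υ) : Mat m) p r = 0 := by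
  obtain ⟨l, u, hl, hu, hlu⟩ := exists_one_add_mul_mul_apply_eq_zero
    (G := G) (S := T.image Fin.castSucc) fun b hb => by
      obtain ⟨a, ha, rfl⟩ := Finset.mem_image.1 hb
      exact hG a ha
  have transpose_mem {c : Mat m}
      (hc : ∀ p i, c p i ≠ 0 → ∃ a ∈ T.image Fin.castSucc, i ≤ a ∧ a < p) :
      cᵀ ∈ nilMatrices T := fun i p hs =>
    by_contra fun h => hs (Finset.exists_mem_image.1 (hc p i h))
  refine ⟨lᵀ, transpose_mem hl, uᵀ, transpose_mem hu, fun p r h => ?_⟩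
  rw [← Matrix.transpose_one, ← Matrix.transpose_add, ← Matrix.transpose_add,
    Matrix.transpose_transpose]
  exact hlu p r (Finset.exists_mem_image.2 h)

theorem exists_outer_block_diagonalisation (hsym : IsOuterSymmetric T k) {f : Mat m →ₗ[ℂ] ℂ}
    (hf : ∀ a ∈ T, (a : ℕ) + 2 ≤ k →
      ((valueMatrix f).toSquareBlockProp (· ≤ a.castSucc)).det ≠ 0) :
    ∃ Λ ∈ nilMatrices T, ∃ M ∈ nilMatrices T,
      (∀ i j, Λ i j ≠ 0 → (i : ℕ) + 2 ≤ k) ∧ (∀ i j, M i j ≠ 0 → m + 2 ≤ (j : ℕ) + k) ∧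
      ∀ p q, ¬SameOuterBlock T k p q →
        ((1 + Λ)ᵀ * valueMatrix f * antitranspose (1 + M) : Mat m) p q.rev = 0 := by
  let T' := T.filter fun a : Fin m => (a : ℕ) + 2 ≤ k
  obtain ⟨Λ, hΛ, Υ, hΥ, hzero⟩ := exists_one_add_transpose_mul_mul_apply_eq_zero
    (T := T') fun a ha => hf a (Finset.mem_filter.1 ha).1 (Finset.mem_filter.1 ha).2
  have hM := antitranspose_mem_nilMatrices hΥ
  have hΥT : T'.image Fin.rev ⊆ T := Finset.image_subset_iff.2 fun a ha =>
    hsym a (Finset.mem_filter.1 ha).1 (Or.inl (Finset.mem_filter.1 ha).2)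
  refine ⟨Λ, nilMatrices_mono (Finset.filter_subset _ _) hΛ, antitranspose Υ,
    nilMatrices_mono hΥT hM, fun i j h => ?_, fun i j h => ?_, fun p q hblock => ?_⟩
  · obtain ⟨a, ha, hia, -⟩ := not_imp_comm.1 (hΛ i j) h
    have := (Finset.mem_filter.1 ha).2
    omega
  · obtain ⟨a, ha, hja, -⟩ := separates_image_rev.1 (not_imp_comm.1 (hM i j) h)
    have := (Finset.mem_filter.1 ha).2
    rw [Fin.val_rev] at hja
    omega
  · obtain ⟨a, ha, hak, hne⟩ : ∃ a ∈ T, (a : ℕ) + 2 ≤ k ∧ ¬((p : ℕ) ≤ a ↔ (q.rev : ℕ) ≤ a) := by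
      simpa only [SameOuterBlock, not_forall, exists_prop] using hblock
    rw [map_add, antitranspose_antitranspose, antitranspose_one]
    exact hzero p q.rev ⟨a, Finset.mem_filter.2 ⟨ha, hak⟩, hne⟩

theorem exists_map_exp_conj_single_eq_zero (hT : IsCascadeShape T k) (hsym : IsOuterSymmetric T k)
    (f : Mat m →ₗ[ℂ] ℂ)
    (hf : ∀ a ∈ T, (a : ℕ) + 2 ≤ k →
      ((valueMatrix f).toSquareBlockProp (· ≤ a.castSucc)).det ≠ 0) :
    ∃ X ∈ nilMatrices T, ∀ p q, IsInnerCorner T k p q → ¬SameOuterBlock T k p q →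
      f (exp X * single p q 1 * exp (-X)) = 0 := by
  obtain ⟨Λ, hΛ, M, hM, hΛrow, hMcol, hzero⟩ := exists_outer_block_diagonalisation hsym hf
  have hk := hT.two_mul_le
  obtain ⟨c, hc, hkc, hcm⟩ := hT.inner
  obtain ⟨X, hX, hconj⟩ := exists_exp_mul_mul_exp_neg_eq hΛ hM
    (matrix_mul_eq_zero fun i j hij => funext fun r => by_contra fun h => by
      have := hMcol _ _ hij
      have := hΛrow _ _ h
      omega)
  refine ⟨X, hX, fun p q hpq hblock => ?_⟩
  have hpc := hpq.1 c hc hkc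
  have hcq := hpq.2 c hc hcm
  rw [hconj, map_mul_single_mul_eq_valueMatrix]
  · exact hzero p q hblock
  · refine matrix_mul_eq_zero fun i j hij => funext fun r => ?_
    refine Matrix.single_apply_of_row_ne (fun h => ?_) _ _ _
    have := hMcol _ _ (h ▸ hij)
    omega
  · refine matrix_mul_eq_zero fun i j hij => funext fun r => by_contra fun h => ?_
    obtain rfl : q = j := not_imp_comm.1 (Matrix.single_apply_of_col_ne _ _ · _) hij
    have := hΛrow _ _ h
    omega

end FunctionalNormalForm

/-! ### Zariski open sets -/

section Zariski

open Polynomial (C X)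

variable {V : Type*} [AddCommGroup V] [Module ℂ V]

/-- The algebra of polynomial functions on `V`; the sets `{v | p v ≠ 0}`, for `p` a polynomial
function, generate the Zariski topology. -/
def polyFunctions (V : Type*) [AddCommGroup V] [Module ℂ V] : Subalgebra ℂ (V → ℂ) :=
  Algebra.adjoin ℂ (Set.range fun l : Module.Dual ℂ V => (l : V → ℂ))

theorem linear_mem_polyFunctions (l : V →ₗ[ℂ] ℂ) : ⇑l ∈ polyFunctions V :=
  Algebra.subset_adjoin ⟨l, rfl⟩

theorem matrix_det_mem_polyFunctions {ι : Type*} [Fintype ι] [DecidableEq ι]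
    (A : V →ₗ[ℂ] Matrix ι ι ℂ) : (fun v => (A v).det) ∈ polyFunctions V := by
  have h : (fun v => (A v).det) =
      ∑ σ : Equiv.Perm ι, ((Equiv.Perm.sign σ : ℤ) : ℂ) •
        ∏ i, ⇑(Matrix.entryLinearMap ℂ ℂ (σ i) i ∘ₗ A) := by
    funext v
    simp only [Matrix.det_apply', Finset.sum_apply, Pi.smul_apply, Finset.prod_apply, smul_eq_mul,
      LinearMap.comp_apply, Matrix.entryLinearMap_apply]
  rw [h]
  exact sum_mem fun σ _ => SMulMemClass.smul_mem _
    (prod_mem fun i _ => linear_mem_polyFunctions _)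

theorem linearMap_det_mem_polyFunctions {W : Type*} [AddCommGroup W] [Module ℂ W]
    [FiniteDimensional ℂ W] (A : V →ₗ[ℂ] W →ₗ[ℂ] W) :
    (fun v => LinearMap.det (A v)) ∈ polyFunctions V := by
  have h := matrix_det_mem_polyFunctions
    ((LinearMap.toMatrix (finBasis ℂ W) (finBasis ℂ W)).toLinearMap ∘ₗ A)
  simpa only [LinearMap.comp_apply, LinearEquiv.coe_coe, LinearMap.det_toMatrix] using h

theorem exists_polynomial_eval_eq_of_mem_polyFunctions {p : V → ℂ} (hp : p ∈ polyFunctions V)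
    (u d : V) : ∃ P : Polynomial ℂ, ∀ t : ℂ, P.eval t = p (u + t • d) := by
  induction hp using Algebra.adjoin_induction with
  | mem x hx =>
    obtain ⟨l, rfl⟩ := hx
    refine ⟨C (l u) + X * C (l d), fun t => ?_⟩
    change _ = l (u + t • d)
    rw [map_add, map_smul, smul_eq_mul, Polynomial.eval_add, Polynomial.eval_mul,
      Polynomial.eval_C, Polynomial.eval_C, Polynomial.eval_X]
  | algebraMap r => exact ⟨C r, fun t => Polynomial.eval_C⟩
  | add x y _ _ hx hy =>
    obtain ⟨P, hP⟩ := hx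
    obtain ⟨Q, hQ⟩ := hy
    exact ⟨P + Q, fun t => by rw [Polynomial.eval_add, hP, hQ, Pi.add_apply]⟩
  | mul x y _ _ hx hy =>
    obtain ⟨P, hP⟩ := hx
    obtain ⟨Q, hQ⟩ := hy
    exact ⟨P * Q, fun t => by rw [Polynomial.eval_mul, hP, hQ, Pi.mul_apply]⟩

theorem zOpen_ne_zero {p : V → ℂ} (hp : p ∈ polyFunctions V) : zOpen {v | p v ≠ 0} :=
  .basic _ ⟨p, hp, rfl⟩

theorem zOpen.exists_polyFunction {O : Set V} (hO : zOpen O) {u : V} (hu : u ∈ O) :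
    ∃ p ∈ polyFunctions V, p u ≠ 0 ∧ ∀ w, p w ≠ 0 → w ∈ O := by
  change TopologicalSpace.GenerateOpen _ O at hO
  induction hO with
  | basic s hs =>
    obtain ⟨p, hp, rfl⟩ := hs
    exact ⟨p, hp, hu, fun _ hw => hw⟩
  | univ => exact ⟨1, one_mem _, one_ne_zero, fun _ _ => trivial⟩
  | inter s t _ _ hs ht =>
    obtain ⟨p, hp, hpu, hps⟩ := hs hu.1
    obtain ⟨q, hq, hqu, hqt⟩ := ht hu.2
    exact ⟨p * q, mul_mem hp hq, mul_ne_zero hpu hqu, fun w hw =>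
      ⟨hps w (left_ne_zero_of_mul hw), hqt w (right_ne_zero_of_mul hw)⟩⟩
  | sUnion S _ ih =>
    obtain ⟨s, hs, hus⟩ := hu
    obtain ⟨p, hp, hpu, hps⟩ := ih s hs hus
    exact ⟨p, hp, hpu, fun w hw => ⟨s, hs, hps w hw⟩⟩

theorem exists_mul_line_ne_zero {p q : V → ℂ} (hp : p ∈ polyFunctions V)
    (hq : q ∈ polyFunctions V) (u d : V) {r s : ℂ} (hr : p (u + r • d) ≠ 0)
    (hs : q (u + s • d) ≠ 0) : ∃ t : ℂ, t ≠ 0 ∧ p (u + t • d) ≠ 0 ∧ q (u + t • d) ≠ 0 := by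
  obtain ⟨P, hP⟩ := exists_polynomial_eval_eq_of_mem_polyFunctions hp u d
  obtain ⟨Q, hQ⟩ := exists_polynomial_eval_eq_of_mem_polyFunctions hq u d
  have hP0 : P ≠ 0 := fun h => hr (by rw [← hP, h, Polynomial.eval_zero])
  have hQ0 : Q ≠ 0 := fun h => hs (by rw [← hQ, h, Polynomial.eval_zero])
  obtain ⟨t, ht⟩ : ∃ t, (X * (P * Q)).eval t ≠ 0 := by
    by_contra! h
    exact mul_ne_zero Polynomial.X_ne_zero (mul_ne_zero hP0 hQ0)
      (Polynomial.funext fun t => (h t).trans Polynomial.eval_zero.symm)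
  rw [Polynomial.eval_mul, Polynomial.eval_mul, Polynomial.eval_X, hP, hQ] at ht
  exact ⟨t, left_ne_zero_of_mul ht, mul_ne_zero_iff.1 (right_ne_zero_of_mul ht)⟩

theorem zOpen.exists_add_smul_mem {O : Set V} (hO : zOpen O) {u : V} (hu : u ∈ O) (d : V) :
    ∃ t : ℂ, t ≠ 0 ∧ u + t • d ∈ O := by
  obtain ⟨p, hp, hpu, hpO⟩ := hO.exists_polyFunction hu
  have hp0 : p (u + (0 : ℂ) • d) ≠ 0 := by rwa [zero_smul, add_zero]
  obtain ⟨t, ht, hpt, -⟩ := exists_mul_line_ne_zero hp hp u d hp0 hp0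
  exact ⟨t, ht, hpO _ hpt⟩

theorem zDense_ne_zero {p : V → ℂ} (hp : p ∈ polyFunctions V) {v : V} (hv : p v ≠ 0) :
    zDense {v | p v ≠ 0} := by
  let _ := zariskiTop V
  refine dense_iff_inter_open.2 ?_
  rintro U hU ⟨u, hu⟩
  obtain ⟨q, hq, hqu, hqU⟩ := zOpen.exists_polyFunction hU hu
  obtain ⟨t, -, hpt, hqt⟩ := exists_mul_line_ne_zero hp hq u (v - u) (r := 1) (s := 0)
    (by rwa [one_smul, add_sub_cancel]) (by rwa [zero_smul, add_zero])
  exact ⟨u + t • (v - u), hqU _ hqt, hpt⟩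

theorem exists_polyFunction_finrank_ker_le {N M : Type*} [AddCommGroup N] [Module ℂ N]
    [FiniteDimensional ℂ N] [AddCommGroup M] [Module ℂ M] (B : V →ₗ[ℂ] N →ₗ[ℂ] M) (v : V) :
    ∃ p ∈ polyFunctions V, p v ≠ 0 ∧ ∀ w, p w ≠ 0 →
      finrank ℂ (LinearMap.ker (B w)) ≤ finrank ℂ (LinearMap.ker (B v)) := by
  obtain ⟨W, hW⟩ := Submodule.exists_isCompl (LinearMap.ker (B v))
  have hinj : LinearMap.ker (B v ∘ₗ W.subtype) = ⊥ := LinearMap.ker_eq_bot'.2 fun x hx =>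
    Subtype.ext (Submodule.disjoint_def.1 hW.disjoint _ hx x.2)
  obtain ⟨π, hπ⟩ := LinearMap.exists_leftInverse_of_injective _ hinj
  let A : V →ₗ[ℂ] W →ₗ[ℂ] W := LinearMap.llcomp ℂ W M W π ∘ₗ LinearMap.lcomp ℂ M W.subtype ∘ₗ B
  refine ⟨_, linearMap_det_mem_polyFunctions A, ?_, fun w hw => ?_⟩
  · change LinearMap.det (π ∘ₗ B v ∘ₗ W.subtype) ≠ 0
    rw [hπ, LinearMap.det_id]
    exact one_ne_zero
  · have hker : LinearMap.ker (A w) = ⊥ :=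
      not_not.1 fun h => hw (LinearMap.det_eq_zero_iff_ker_ne_bot.2 h)
    have hdisj : Disjoint (LinearMap.ker (B w)) W := by
      refine Submodule.disjoint_def.2 fun x hx hxW => ?_
      have hx0 : A w ⟨x, hxW⟩ = 0 := (congrArg π hx).trans (map_zero π)
      exact congrArg Subtype.val ((LinearMap.ker_eq_bot'.1 hker) _ hx0)
    have h := Submodule.finrank_add_finrank_le_of_disjoint hdisj
    rw [← Submodule.finrank_add_eq_of_isCompl hW] at h
    exact Nat.le_of_add_le_add_right h

end Zariski

/-! ### Root spaces of a simple Lie algebra -/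

section RootSpaces

variable {L : Type*} [LieRing L] [LieAlgebra ℂ L]

theorem lie_mem_lieSpan {s : Set L} {y : L} (hy : ∀ x ∈ s, ⁅y, x⁆ ∈ LieSubalgebra.lieSpan ℂ L s)
    {x : L} (hx : x ∈ LieSubalgebra.lieSpan ℂ L s) : ⁅y, x⁆ ∈ LieSubalgebra.lieSpan ℂ L s := by
  induction hx using LieSubalgebra.lieSpan_induction with
  | mem x hx => exact hy x hx
  | zero => rw [lie_zero]; exact zero_mem _
  | add a b _ _ ha hb => rw [lie_add]; exact add_mem ha hb
  | smul c a _ ha => rw [lie_smul]; exact Submodule.smul_mem _ c ha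
  | lie a b ha' hb' ha hb =>
    rw [leibniz_lie]
    exact add_mem (LieSubalgebra.lie_mem _ ha hb') (LieSubalgebra.lie_mem _ ha' hb)

theorem lie_eq_zero_of_mem_lieSpan {s : Set L} {y : L} (hy : ∀ x ∈ s, ⁅y, x⁆ = 0)
    {x : L} (hx : x ∈ LieSubalgebra.lieSpan ℂ L s) : ⁅y, x⁆ = 0 := by
  induction hx using LieSubalgebra.lieSpan_induction with
  | mem x hx => exact hy x hx
  | zero => exact lie_zero y
  | add a b _ _ ha hb => rw [lie_add, ha, hb, add_zero]
  | smul c a _ ha => rw [lie_smul, ha, smul_zero]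
  | lie a b _ _ ha hb => rw [leibniz_lie, ha, hb, zero_lie, lie_zero, add_zero]

theorem eq_zero_of_lieSpan_eq_top [LieAlgebra.IsSimple ℂ L] {s : Set L}
    (hs : LieSubalgebra.lieSpan ℂ L s = ⊤) {z : L} (hz : ∀ x ∈ s, ⁅z, x⁆ = 0) : z = 0 := by
  have hcenter : z ∈ LieAlgebra.center ℂ L := by
    refine (LieModule.mem_maxTrivSubmodule ℂ L L z).mpr fun x => ?_
    rw [← lie_skew, neg_eq_zero]
    exact lie_eq_zero_of_mem_lieSpan hz (hs ▸ LieSubalgebra.mem_top x)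
  rwa [LieAlgebra.center_eq_bot ℂ L, LieSubmodule.mem_bot] at hcenter

theorem killingForm_lie_left (x y z : L) :
    killingForm ℂ L ⁅x, y⁆ z = killingForm ℂ L x ⁅y, z⁆ :=
  LieModule.traceForm_apply_lie_apply ℂ L L x y z

namespace TriangularData

variable {SR : Type*} [Fintype SR] [DecidableEq SR] (td : TriangularData L SR)

theorem eq_top_of_forall_rs_le {S : Submodule ℂ L} (hS : ∀ γ, td.rs γ ≤ S) : S = ⊤ := by
  rw [eq_top_iff, ← td.isInternal.submodule_iSup_eq_top]
  exact iSup_le fun γ => hS γ.1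

theorem exists_mem_rs_ne_zero {γ : SR → ℤ} (hγ : γ ∈ td.R) : ∃ x ∈ td.rs γ, x ≠ 0 := by
  refine (Submodule.ne_bot_iff _).mp fun h => ?_
  exact absurd (td.rs_dim γ hγ) (by rw [h, finrank_bot]; exact zero_ne_one)

theorem exists_linearMap_apply_eq_smul (c : (SR → ℤ) → ℂ) :
    ∃ D : L →ₗ[ℂ] L, ∀ γ, ∀ x ∈ td.rs γ, D x = c γ • x := by
  let decomposition := LinearEquiv.ofBijective (DirectSum.coeLinearMap _) td.isInternal
  refine ⟨(DirectSum.toModule ℂ _ L fun γ => c γ.1 • (td.rs γ.1).subtype) ∘ₗ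
    decomposition.symm.toLinearMap, fun γ x hx => ?_⟩
  by_cases hγ : γ = 0 ∨ γ ∈ td.R
  · have hx' : decomposition.symm x = DirectSum.lof ℂ _ _ ⟨γ, hγ⟩ ⟨x, hx⟩ := by
      rw [LinearEquiv.symm_apply_eq]
      exact (DirectSum.coeLinearMap_lof (fun γ : {γ // γ = 0 ∨ γ ∈ td.R} => td.rs γ.1)
        ⟨γ, hγ⟩ ⟨x, hx⟩).symm
    rw [LinearMap.comp_apply, LinearEquiv.coe_coe, hx', DirectSum.toModule_lof,
      LinearMap.smul_apply, Submodule.subtype_apply]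
  · rw [not_or] at hγ
    rw [td.rs_bot γ hγ.1 hγ.2, Submodule.mem_bot] at hx
    rw [hx, map_zero, smul_zero]

theorem exists_lie_eq_smul [LieAlgebra.IsKilling ℂ L] [FiniteDimensional ℂ L]
    (c : (SR → ℤ) →+ ℂ) : ∃ h : L, ∀ γ, ∀ x ∈ td.rs γ, ⁅h, x⁆ = c γ • x := by
  obtain ⟨D, hD⟩ := td.exists_linearMap_apply_eq_smul c
  let bracket : L →ₗ[ℂ] L →ₗ[ℂ] L := (LieModule.toEnd ℂ L L : L →ₗ[ℂ] Module.End ℂ L)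
  let defect : L →ₗ[ℂ] L →ₗ[ℂ] L :=
    bracket.compr₂ D - (bracket.compl₂ D - (bracket.compl₂ D).flip)
  have defect_apply : ∀ x y, defect x y = D ⁅x, y⁆ - (⁅x, D y⁆ - ⁅y, D x⁆) := fun _ _ => rfl
  have defect_eq_zero : defect = 0 := by
    rw [← LinearMap.ker_eq_top]
    refine td.eq_top_of_forall_rs_le fun γ x hx => ?_
    rw [LinearMap.mem_ker, ← LinearMap.ker_eq_top]
    refine td.eq_top_of_forall_rs_le fun δ y hy => ?_
    rw [LinearMap.mem_ker, defect_apply, hD γ x hx, hD δ y hy,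
      hD _ _ (td.bracket_mem γ δ x hx y hy), map_add, lie_smul, lie_smul, ← lie_skew x y]
    module
  have leibniz : ∀ x y, D ⁅x, y⁆ = ⁅x, D y⁆ - ⁅y, D x⁆ := fun x y => by
    rw [← sub_eq_zero, ← defect_apply, defect_eq_zero, LinearMap.zero_apply, LinearMap.zero_apply]
  obtain ⟨h, hh⟩ := LieDerivation.IsKilling.exists_eq_ad (R := ℂ)
    (⟨D, leibniz⟩ : LieDerivation ℂ L L)
  refine ⟨h, fun γ x hx => ?_⟩
  rw [← LieDerivation.ad_apply_apply ℂ, hh]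
  exact hD γ x hx

theorem killingForm_eq_zero_of_add_ne_zero [LieAlgebra.IsKilling ℂ L] [FiniteDimensional ℂ L]
    {γ δ : SR → ℤ} (hγδ : γ + δ ≠ 0) {x y : L} (hx : x ∈ td.rs γ) (hy : y ∈ td.rs δ) :
    killingForm ℂ L x y = 0 := by
  obtain ⟨a, ha⟩ := Function.ne_iff.mp hγδ
  obtain ⟨h, hh⟩ := td.exists_lie_eq_smul ((Int.castAddHom ℂ).comp (Pi.evalAddMonoidHom _ a))
  have invariance : killingForm ℂ L ⁅h, x⁆ y = - killingForm ℂ L x ⁅h, y⁆ := by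
    rw [← lie_skew, map_neg, LinearMap.neg_apply, killingForm_lie_left]
  have hmul : ((γ a + δ a : ℤ) : ℂ) * killingForm ℂ L x y = 0 := by
    rw [hh γ x hx, hh δ y hy, map_smul, map_smul, LinearMap.smul_apply] at invariance
    push_cast
    rw [add_mul, ← eq_neg_iff_add_eq_zero]
    exact invariance
  exact (mul_eq_zero.mp hmul).resolve_left (Int.cast_ne_zero.mpr ha)

theorem eq_zero_of_killingForm_eq_zero [LieAlgebra.IsKilling ℂ L] [FiniteDimensional ℂ L]
    {γ : SR → ℤ} {x : L} (hx : x ∈ td.rs γ)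
    (h : ∀ y ∈ td.rs (-γ), killingForm ℂ L x y = 0) : x = 0 := by
  refine (LieAlgebra.IsKilling.killingForm_nondegenerate ℂ L).1 x fun y => ?_
  have hker : LinearMap.ker (killingForm ℂ L x) = ⊤ := by
    refine td.eq_top_of_forall_rs_le fun δ y hy => ?_
    by_cases hδ : γ + δ = 0
    · rw [← neg_eq_of_add_eq_zero_right hδ] at hy
      exact h y hy
    · exact td.killingForm_eq_zero_of_add_ne_zero hδ hx hy
  exact LinearMap.congr_fun (LinearMap.ker_eq_top.mp hker) y

theorem lie_mem_lieSpan_of_lie_eq_zero {S : Set (SR → ℤ)}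
    (hS : ∀ γ ∈ S, ∀ δ ∈ td.R, δ ∉ S → ∀ x ∈ td.rs γ, ∀ y ∈ td.rs δ, ⁅x, y⁆ = 0) (y : L) {x : L}
    (hx : x ∈ LieSubalgebra.lieSpan ℂ L (⋃ γ ∈ S, (td.rs γ : Set L))) :
    ⁅y, x⁆ ∈ LieSubalgebra.lieSpan ℂ L (⋃ γ ∈ S, (td.rs γ : Set L)) := by
  set M := LieSubalgebra.lieSpan ℂ L (⋃ γ ∈ S, (td.rs γ : Set L))
  have rs_le : ∀ γ ∈ S, ∀ x ∈ td.rs γ, x ∈ M := fun γ hγ x hx =>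
    LieSubalgebra.subset_lieSpan (Set.mem_biUnion hγ hx)
  suffices h :
      M.toSubmodule.comap ((LieModule.toEnd ℂ L L : L →ₗ[ℂ] Module.End ℂ L).flip x) = ⊤ from
    h.ge (Submodule.mem_top (x := y))
  refine td.eq_top_of_forall_rs_le fun δ y hy => ?_
  change ⁅y, x⁆ ∈ M
  by_cases hδS : δ ∈ S
  · exact M.lie_mem (rs_le δ hδS y hy) hx
  refine lie_mem_lieSpan (fun x hx => ?_) hx
  obtain ⟨γ, hγ, hx⟩ := Set.mem_iUnion₂.mp hx
  by_cases hδ : δ = 0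
  · have hmem := td.bracket_mem δ γ y hy x hx
    rw [hδ, zero_add] at hmem
    exact rs_le γ hγ _ hmem
  by_cases hδR : δ ∈ td.R
  · rw [← lie_skew, hS γ hγ δ hδR hδS x hx y hy, neg_zero]
    exact M.zero_mem
  · rw [td.rs_bot δ hδ hδR, Submodule.mem_bot] at hy
    rw [hy, zero_lie]
    exact M.zero_mem

section Simple

variable [LieAlgebra.IsSimple ℂ L]

theorem lieSpan_eq_top_of_lie_eq_zero {S : Set (SR → ℤ)} (hne : ∃ γ ∈ S, γ ∈ td.R)
    (hS : ∀ γ ∈ S, ∀ δ ∈ td.R, δ ∉ S → ∀ x ∈ td.rs γ, ∀ y ∈ td.rs δ, ⁅x, y⁆ = 0) :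
    LieSubalgebra.lieSpan ℂ L (⋃ γ ∈ S, (td.rs γ : Set L)) = ⊤ := by
  let I : LieIdeal ℂ L :=
    { (LieSubalgebra.lieSpan ℂ L (⋃ γ ∈ S, (td.rs γ : Set L))).toSubmodule with
      lie_mem := fun {y _} hx => td.lie_mem_lieSpan_of_lie_eq_zero hS y hx }
  obtain ⟨γ, hγS, hγR⟩ := hne
  obtain ⟨x, hx, hx0⟩ := td.exists_mem_rs_ne_zero hγR
  have hxI : x ∈ I := LieSubalgebra.subset_lieSpan (Set.mem_biUnion hγS hx)
  have hI : I = ⊤ := (LieAlgebra.IsSimple.eq_bot_or_eq_top (R := ℂ) I).resolve_left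
    fun h => hx0 ((LieSubmodule.mem_bot x).mp (h ▸ hxI))
  exact eq_top_iff.mpr fun y _ => (hI ▸ LieSubmodule.mem_top y : y ∈ I)

theorem mem_of_forall_lie_eq_zero {S : Set (SR → ℤ)} (hne : ∃ γ ∈ S, γ ∈ td.R)
    (hS : ∀ γ ∈ S, ∀ δ ∈ td.R, δ ∉ S → ∀ x ∈ td.rs γ, ∀ y ∈ td.rs δ, ⁅x, y⁆ = 0)
    {δ : SR → ℤ} (hδ : δ ∈ td.R) : δ ∈ S := by
  by_contra hδS
  obtain ⟨y, hy, hy0⟩ := td.exists_mem_rs_ne_zero hδ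
  refine hy0 (eq_zero_of_lieSpan_eq_top (td.lieSpan_eq_top_of_lie_eq_zero hne hS) fun x hx => ?_)
  obtain ⟨γ, hγ, hx⟩ := Set.mem_iUnion₂.mp hx
  rw [← lie_skew, hS γ hγ δ hδ hδS x hx y hy, neg_zero]

theorem eq_zero_of_forall_lie_rs_eq_zero {z : L}
    (hz : ∀ γ ∈ td.R, ∀ x ∈ td.rs γ, ⁅z, x⁆ = 0) : z = 0 := by
  have hspan : LieSubalgebra.lieSpan ℂ L (⋃ γ ∈ (td.R : Set (SR → ℤ)), (td.rs γ : Set L)) = ⊤ :=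
    td.lieSpan_eq_top_of_lie_eq_zero ⟨td.theta, td.theta_mem, td.theta_mem⟩
      fun _ _ δ hδ hδ' => absurd hδ hδ'
  refine eq_zero_of_lieSpan_eq_top hspan fun x hx => ?_
  obtain ⟨γ, hγ, hx⟩ := Set.mem_iUnion₂.mp hx
  exact hz γ hγ x hx

end Simple

end TriangularData

end RootSpaces

/-! ### Root frames of type A -/

section TypeARoots

variable {m : ℕ}

/-- The root `ε_i − ε_j` of `sl_{m+1}` in simple-root coordinates; it is `0` for `i = j`. -/
def epsRoot (i j : Fin (m + 1)) : Fin m → ℤ := fun a =>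
  (if i ≤ a.castSucc then 1 else 0) - (if j ≤ a.castSucc then 1 else 0)

theorem epsRoot_self (i : Fin (m + 1)) : epsRoot i i = 0 := funext fun _ => sub_self _

theorem neg_epsRoot (i j : Fin (m + 1)) : -epsRoot i j = epsRoot j i :=
  funext fun _ => neg_sub _ _

theorem epsRoot_add_epsRoot (i j l : Fin (m + 1)) :
    epsRoot i j + epsRoot j l = epsRoot i l := funext fun _ => sub_add_sub_cancel _ _ _

theorem intv_eq_epsRoot {i j : Fin m} (hij : i ≤ j) : intv i j = epsRoot i.castSucc j.succ := by
  funext a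
  simp only [intv, epsRoot, Fin.le_def, Fin.val_castSucc, Fin.val_succ] at hij ⊢
  split_ifs <;> omega

/-- The coefficient of `ε_x` in a linear combination of simple roots `ε_a − ε_{a+1}`. -/
def epsCoord (x : Fin (m + 1)) : (Fin m → ℤ) →+ ℤ where
  toFun γ := (if h : (x : ℕ) < m then γ ⟨x, h⟩ else 0) -
    (if h : 0 < (x : ℕ) then γ ⟨x - 1, by omega⟩ else 0)
  map_zero' := by simp only [Pi.zero_apply, dite_eq_ite, ite_self, sub_self]
  map_add' γ δ := by
    simp only [Pi.add_apply]
    split_ifs <;> ring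

theorem epsCoord_epsRoot (x i j : Fin (m + 1)) :
    epsCoord x (epsRoot i j) = (if x = i then 1 else 0) - (if x = j then 1 else 0) := by
  simp only [epsCoord, AddMonoidHom.coe_mk, ZeroHom.coe_mk, epsRoot, Fin.ext_iff, Fin.le_def,
    Fin.val_castSucc]
  split_ifs <;> omega

theorem epsRoot_injective {i j k l : Fin (m + 1)} (hij : i ≠ j)
    (h : epsRoot i j = epsRoot k l) : i = k ∧ j = l := by
  have at_i := congrArg (epsCoord i) h
  have at_j := congrArg (epsCoord j) h
  simp only [epsCoord_epsRoot, if_pos, if_neg hij, if_neg hij.symm] at at_i at_j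
  constructor
  · split_ifs at at_i <;> first | assumption | omega
  · split_ifs at at_j <;> first | assumption | omega

theorem epsRoot_add_epsRoot_ne {i j k l : Fin (m + 1)} (hij : i ≠ j) (hkl : k ≠ l) (hjk : j ≠ k)
    (hil : i ≠ l) (p q : Fin (m + 1)) : epsRoot i j + epsRoot k l ≠ epsRoot p q := by
  intro h
  have at_i := congrArg (epsCoord i) h
  have at_k := congrArg (epsCoord k) h
  simp only [map_add, epsCoord_epsRoot, if_pos, if_neg hij, if_neg hil, if_neg hkl,
    if_neg hjk.symm] at at_i at_k
  grind

end TypeARoots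

section RootFrame

variable {L : Type*} [LieRing L] [LieAlgebra ℂ L] {m : ℕ} {td : TriangularData L (Fin m)}
  {e : Fin (m + 1) → Fin (m + 1) → L}

/-- A choice of a root vector `e i j` for every root `ε_i − ε_j` of a triangular decomposition
of type `A_m`; the diagonal values `e i i` are irrelevant. -/
structure IsRootFrame (td : TriangularData L (Fin m)) (e : Fin (m + 1) → Fin (m + 1) → L) :
    Prop where
  mem_R_iff : ∀ γ, γ ∈ td.R ↔ ∃ i j, i ≠ j ∧ γ = epsRoot i j
  mem_rs : ∀ {i j}, i ≠ j → e i j ∈ td.rs (epsRoot i j)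
  ne_zero : ∀ {i j}, i ≠ j → e i j ≠ 0

theorem lie_lie_eq_zero_of_string {e f x : L} {c : ℂ} (hte : ⁅⁅e, f⁆, e⁆ = 0) (hfx : ⁅f, x⁆ = 0)
    (heex : ⁅e, ⁅e, x⁆⁆ = 0) (htx : ⁅⁅e, f⁆, x⁆ = c • x) : ⁅⁅e, f⁆, x⁆ = 0 := by
  have hfex : ⁅f, ⁅e, x⁆⁆ = -(c • x) := by
    rw [← htx, lie_lie e f x, hfx, lie_zero, zero_sub, neg_neg]
  have htex : c • ⁅e, x⁆ = -(c • ⁅e, x⁆) := by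
    calc c • ⁅e, x⁆ = ⁅⁅e, f⁆, ⁅e, x⁆⁆ := by
          rw [leibniz_lie ⁅e, f⁆ e x, hte, zero_lie, zero_add, htx, lie_smul]
      _ = -(c • ⁅e, x⁆) := by
          rw [lie_lie e f, heex, lie_zero, sub_zero, hfex, lie_neg, lie_smul]
  have := IsAddTorsionFree.of_isTorsionFree ℂ L
  rcases smul_eq_zero.mp (self_eq_neg.mp htex) with hc | hex
  · rw [htx, hc, zero_smul]
  · rw [lie_lie e f x, hfx, hex, lie_zero, lie_zero, sub_zero]

namespace IsRootFrame

variable (he : IsRootFrame td e) {i j k l : Fin (m + 1)}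
include he

theorem epsRoot_mem_R (hij : i ≠ j) : epsRoot i j ∈ td.R := (he.mem_R_iff _).mpr ⟨i, j, hij, rfl⟩

theorem exists_eq_smul (hij : i ≠ j) {x : L} (hx : x ∈ td.rs (epsRoot i j)) :
    ∃ c : ℂ, x = c • e i j := by
  have hdim := td.rs_dim _ (he.epsRoot_mem_R hij)
  have hne : (⟨e i j, he.mem_rs hij⟩ : td.rs (epsRoot i j)) ≠ 0 :=
    fun h => he.ne_zero hij (congrArg Subtype.val h)
  obtain ⟨c, hc⟩ := (finrank_eq_one_iff_of_nonzero' _ hne).mp hdim ⟨x, hx⟩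
  exact ⟨c, (congrArg Subtype.val hc).symm⟩

theorem lie_eq_zero (hij : i ≠ j) (hkl : k ≠ l) (hjk : j ≠ k) (hil : i ≠ l) :
    ⁅e i j, e k l⁆ = 0 := by
  have hmem := td.bracket_mem _ _ _ (he.mem_rs hij) _ (he.mem_rs hkl)
  rwa [td.rs_bot, Submodule.mem_bot] at hmem
  · rw [← epsRoot_self i]
    exact epsRoot_add_epsRoot_ne hij hkl hjk hil i i
  · rw [he.mem_R_iff]
    rintro ⟨p, q, -, h⟩
    exact epsRoot_add_epsRoot_ne hij hkl hjk hil p q h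

theorem exists_lie_eq_smul (hij : i ≠ j) (hjl : j ≠ l) (hil : i ≠ l) :
    ∃ c : ℂ, ⁅e i j, e j l⁆ = c • e i l := by
  have hmem := td.bracket_mem _ _ _ (he.mem_rs hij) _ (he.mem_rs hjl)
  rw [epsRoot_add_epsRoot] at hmem
  exact he.exists_eq_smul hil hmem

theorem lie_mem_rs_zero (hij : i ≠ j) : ⁅e i j, e j i⁆ ∈ td.rs 0 := by
  have hmem := td.bracket_mem _ _ _ (he.mem_rs hij) _ (he.mem_rs hij.symm)
  rwa [epsRoot_add_epsRoot, epsRoot_self] at hmem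

section Killing

variable [LieAlgebra.IsKilling ℂ L] [FiniteDimensional ℂ L]

theorem killingForm_ne_zero (hij : i ≠ j) : killingForm ℂ L (e i j) (e j i) ≠ 0 := by
  intro h
  refine he.ne_zero hij (td.eq_zero_of_killingForm_eq_zero (he.mem_rs hij) fun y hy => ?_)
  rw [neg_epsRoot] at hy
  obtain ⟨c, rfl⟩ := he.exists_eq_smul hij.symm hy
  rw [map_smul, h, smul_zero]

theorem killingForm_eq_zero (hij : i ≠ j) (hkl : k ≠ l) (h : ¬(k = j ∧ l = i)) :
    killingForm ℂ L (e i j) (e k l) = 0 := by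
  refine td.killingForm_eq_zero_of_add_ne_zero (fun hadd => h ?_) (he.mem_rs hij) (he.mem_rs hkl)
  rw [← neg_eq_iff_add_eq_zero, neg_epsRoot] at hadd
  exact (epsRoot_injective hij.symm hadd).imp Eq.symm Eq.symm

theorem exists_weight {z : L} (hz : z ∈ td.rs 0) (hkl : k ≠ l) :
    ∃ c : ℂ, ⁅z, e k l⁆ = c • e k l ∧ ⁅z, e l k⁆ = -c • e l k := by
  have scalar : ∀ p q, p ≠ q → ∃ c : ℂ, ⁅z, e p q⁆ = c • e p q := fun p q hpq =>
    he.exists_eq_smul hpq (by simpa only [zero_add] using td.bracket_mem 0 _ z hz _ (he.mem_rs hpq))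
  obtain ⟨c, hc⟩ := scalar k l hkl
  obtain ⟨d, hd⟩ := scalar l k hkl.symm
  have invariance : killingForm ℂ L ⁅z, e k l⁆ (e l k) = -killingForm ℂ L (e k l) ⁅z, e l k⁆ := by
    rw [← lie_skew, map_neg, LinearMap.neg_apply, killingForm_lie_left]
  rw [hc, hd, map_smul, map_smul, LinearMap.smul_apply, ← smul_neg, smul_eq_mul, smul_eq_mul,
    mul_neg, ← neg_mul] at invariance
  have hcd : c = -d := mul_right_cancel₀ (he.killingForm_ne_zero hkl) invariance
  exact ⟨c, hc, by rw [hd, hcd, neg_neg]⟩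

theorem lie_eq_zero_of_lie_swap_eq_zero {z : L} (hz : z ∈ td.rs 0) (hkl : k ≠ l)
    (h : ⁅z, e l k⁆ = 0) : ⁅z, e k l⁆ = 0 := by
  obtain ⟨c, hc, hc'⟩ := he.exists_weight hz hkl
  rw [h, eq_comm, smul_eq_zero_iff_left (he.ne_zero hkl.symm), neg_eq_zero] at hc'
  rw [hc, hc', zero_smul]

theorem coroot_ne_zero (hij : i ≠ j) : ⁅e i j, e j i⁆ ≠ 0 := by
  intro h
  obtain ⟨z, hz⟩ := td.exists_lie_eq_smul ((Int.castAddHom ℂ).comp (epsCoord i))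
  have hze : ⁅z, e i j⁆ = e i j := by
    rw [hz _ _ (he.mem_rs hij), AddMonoidHom.comp_apply, epsCoord_epsRoot, if_pos rfl, if_neg hij,
      sub_zero, Int.coe_castAddHom]
    exact (congrArg (· • e i j) Int.cast_one).trans (one_smul ℂ _)
  apply he.killingForm_ne_zero hij
  rw [← hze, killingForm_lie_left, h, map_zero]

theorem lie_coroot_eq_zero (hij : i ≠ j) (hte : ⁅⁅e i j, e j i⁆, e i j⁆ = 0) (hkl : k ≠ l) :
    ⁅⁅e i j, e j i⁆, e k l⁆ = 0 := by
  have ht := he.lie_mem_rs_zero hij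
  have hji := hij.symm
  have kills_from_j : ∀ l, l ≠ i → l ≠ j → ⁅⁅e i j, e j i⁆, e j l⁆ = 0 := by
    intro l hli hlj
    obtain ⟨c, hc, -⟩ := he.exists_weight ht hlj.symm
    obtain ⟨d, hd⟩ := he.exists_lie_eq_smul hij hlj.symm hli.symm
    refine lie_lie_eq_zero_of_string hte (he.lie_eq_zero hji hlj.symm hij hlj.symm) ?_ hc
    rw [hd, lie_smul, he.lie_eq_zero hij hli.symm hji hli.symm, smul_zero]
  have kills_to_i : ∀ l, l ≠ i → l ≠ j → ⁅⁅e i j, e j i⁆, e l i⁆ = 0 := by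
    intro l hli hlj
    obtain ⟨c, hc, -⟩ := he.exists_weight ht hli
    obtain ⟨d, hd⟩ := he.exists_lie_eq_smul hli hij hlj
    refine lie_lie_eq_zero_of_string hte (he.lie_eq_zero hji hli hli.symm hji) ?_ hc
    rw [← lie_skew (e i j) (e l i), hd, lie_neg, lie_smul, he.lie_eq_zero hij hlj hlj.symm hij,
      smul_zero, neg_zero]
  by_cases hki : k = i
  · subst hki
    by_cases hlj : l = j
    · rwa [hlj]
    · exact he.lie_eq_zero_of_lie_swap_eq_zero ht hkl (kills_to_i l hkl.symm hlj)
  by_cases hli : l = i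
  · subst hli
    by_cases hkj : k = j
    · exact he.lie_eq_zero_of_lie_swap_eq_zero ht hkl (hkj ▸ hte)
    · exact kills_to_i k hki hkj
  by_cases hkj : k = j
  · exact hkj ▸ kills_from_j l hli (hkj ▸ hkl.symm)
  by_cases hlj : l = j
  · subst hlj
    exact he.lie_eq_zero_of_lie_swap_eq_zero ht hkl (kills_from_j k hki hkj)
  · rw [lie_lie, he.lie_eq_zero hji hkl (Ne.symm hki) (Ne.symm hlj),
      he.lie_eq_zero hij hkl (Ne.symm hkj) (Ne.symm hli), lie_zero, lie_zero, sub_zero]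

end Killing

section Simple

variable [FiniteDimensional ℂ L] [LieAlgebra.IsSimple ℂ L]

theorem lie_coroot_ne_zero (hij : i ≠ j) : ⁅⁅e i j, e j i⁆, e i j⁆ ≠ 0 := by
  intro hte
  refine he.coroot_ne_zero hij (td.eq_zero_of_forall_lie_rs_eq_zero fun γ hγ x hx => ?_)
  obtain ⟨k, l, hkl, rfl⟩ := (he.mem_R_iff γ).mp hγ
  obtain ⟨c, rfl⟩ := he.exists_eq_smul hkl hx
  rw [lie_smul, he.lie_coroot_eq_zero hij hte hkl, smul_zero]

end Simple

end IsRootFrame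

end RootFrame

section Triangles

variable {L : Type*} [LieRing L] [LieAlgebra ℂ L] {m : ℕ} {td : TriangularData L (Fin m)}
  {e : Fin (m + 1) → Fin (m + 1) → L} {i j k l : Fin (m + 1)}

/-- Three distinct indices whose consecutive root vectors have a nonzero bracket. In type `A`
every triple of distinct indices turns out to be such a triangle. -/
structure IsTriangle (e : Fin (m + 1) → Fin (m + 1) → L) (i j l : Fin (m + 1)) : Prop where
  ne_left : i ≠ j
  ne_right : j ≠ l
  ne_outer : i ≠ l
  lie_ne_zero : ⁅e i j, e j l⁆ ≠ 0

namespace IsRootFrame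

variable [FiniteDimensional ℂ L] (he : IsRootFrame td e)
include he

theorem isTriangle_rotate [LieAlgebra.IsKilling ℂ L] (h : IsTriangle e i j l) :
    IsTriangle e j l i := by
  refine ⟨h.ne_right, h.ne_outer.symm, h.ne_left.symm, fun h0 => ?_⟩
  obtain ⟨c, hc⟩ := he.exists_lie_eq_smul h.ne_left h.ne_right h.ne_outer
  have hκ : c * killingForm ℂ L (e i l) (e l i) = 0 := by
    rw [← smul_eq_mul, ← LinearMap.smul_apply, ← map_smul, ← hc, killingForm_lie_left, h0,
      map_zero]
  have hc0 := (mul_eq_zero.mp hκ).resolve_right (he.killingForm_ne_zero h.ne_outer)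
  exact h.lie_ne_zero (by rw [hc, hc0, zero_smul])

variable [LieAlgebra.IsSimple ℂ L]

theorem isTriangle_reverse (h : IsTriangle e i j l) : IsTriangle e l j i := by
  by_contra hrev
  have hij := h.ne_left
  have hjl := h.ne_right
  have hil := h.ne_outer
  have ht := he.lie_mem_rs_zero hij
  have hlji : ⁅e l j, e j i⁆ = 0 := by
    by_contra h0
    exact hrev ⟨hjl.symm, hij.symm, hil.symm, h0⟩
  have hjil : ⁅e j i, e i l⁆ = 0 := by
    by_contra h0
    exact hrev (he.isTriangle_rotate (he.isTriangle_rotate ⟨hij.symm, hil, hjl, h0⟩))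
  have kills_il : ⁅⁅e i j, e j i⁆, e i l⁆ = 0 := by
    rw [lie_lie, hjil, he.lie_eq_zero hij hil hij.symm hil, lie_zero, lie_zero, sub_zero]
  have kills_jl : ⁅⁅e i j, e j i⁆, e j l⁆ = 0 := by
    refine he.lie_eq_zero_of_lie_swap_eq_zero ht hjl ?_
    rw [lie_lie, ← lie_skew (e j i), hlji, he.lie_eq_zero hij hjl.symm hjl hij, neg_zero,
      lie_zero, lie_zero, sub_zero]
  obtain ⟨c, hc, -⟩ := he.exists_weight ht hij
  obtain ⟨d, hd⟩ := he.exists_lie_eq_smul hij hjl hil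
  have hc0 : c • ⁅e i j, e j l⁆ = 0 := by
    calc c • ⁅e i j, e j l⁆
        = ⁅⁅⁅e i j, e j i⁆, e i j⁆, e j l⁆ + ⁅e i j, ⁅⁅e i j, e j i⁆, e j l⁆⁆ := by
          rw [hc, smul_lie, kills_jl, lie_zero, add_zero]
      _ = 0 := by rw [← leibniz_lie, hd, lie_smul, kills_il, smul_zero]
  refine he.lie_coroot_ne_zero hij ?_
  rw [hc, (smul_eq_zero_iff_left h.lie_ne_zero).mp hc0, zero_smul]

theorem isTriangle_swap (h : IsTriangle e i j l) : IsTriangle e j i l :=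
  he.isTriangle_rotate (he.isTriangle_reverse h)

theorem isTriangle_swap_right (h : IsTriangle e i j l) : IsTriangle e i l j :=
  he.isTriangle_reverse (he.isTriangle_rotate h)

omit [FiniteDimensional ℂ L] [LieAlgebra.IsSimple ℂ L] in
theorem isTriangle_flip (h : IsTriangle e i j k) (h' : IsTriangle e i k l) (hjl : j ≠ l) :
    IsTriangle e j k l ∧ IsTriangle e i j l := by
  obtain ⟨c, hc⟩ := he.exists_lie_eq_smul h.ne_left h.ne_right h.ne_outer
  obtain ⟨d, hd⟩ := he.exists_lie_eq_smul h.ne_right h'.ne_right hjl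
  have hc0 : c ≠ 0 := fun h0 => h.lie_ne_zero (by rw [hc, h0, zero_smul])
  have jacobi : ⁅e i j, ⁅e j k, e k l⁆⁆ = c • ⁅e i k, e k l⁆ := by
    rw [leibniz_lie, he.lie_eq_zero h.ne_left h'.ne_right h.ne_right h'.ne_outer, lie_zero,
      add_zero, hc, smul_lie]
  have hne : ⁅e i j, ⁅e j k, e k l⁆⁆ ≠ 0 := jacobi ▸ smul_ne_zero hc0 h'.lie_ne_zero
  refine ⟨⟨h.ne_right, h'.ne_right, hjl, fun h0 => ?_⟩,
    ⟨h.ne_left, hjl, h'.ne_outer, fun h0 => ?_⟩⟩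
  · exact hne (by rw [h0, lie_zero])
  · exact hne (by rw [hd, lie_smul, h0, smul_zero])

theorem triangle_closed {x y z : Fin (m + 1)} (hx : x = i ∨ x = j ∨ IsTriangle e i j x)
    (hy : y = i ∨ y = j ∨ IsTriangle e i j y) (h : IsTriangle e x y z) :
    z = i ∨ z = j ∨ IsTriangle e i j z := by
  by_cases hzi : z = i
  · exact Or.inl hzi
  by_cases hzj : z = j
  · exact Or.inr (Or.inl hzj)
  have through_i : ∀ {y}, (y = j ∨ IsTriangle e i j y) → IsTriangle e i y z →
      z = i ∨ z = j ∨ IsTriangle e i j z := by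
    rintro y (rfl | hy) h
    · exact Or.inr (Or.inr h)
    · exact Or.inr (Or.inr (he.isTriangle_flip hy h (Ne.symm hzj)).2)
  have triangle_i : ∀ {x y}, (x = j ∨ IsTriangle e i j x) → (y = j ∨ IsTriangle e i j y) →
      x ≠ y → IsTriangle e i x y := by
    rintro x y (rfl | hx) (rfl | hy) hxy
    · exact absurd rfl hxy
    · exact hy
    · exact he.isTriangle_swap_right hx
    · exact (he.isTriangle_flip (he.isTriangle_swap_right hx) hy hxy).2
  rcases hx with rfl | hx
  · exact through_i (hy.resolve_left h.ne_left.symm) h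
  rcases hy with rfl | hy
  · exact through_i hx (he.isTriangle_swap h)
  · have hxiy := he.isTriangle_swap (triangle_i hx hy h.ne_left)
    exact through_i hx (he.isTriangle_swap (he.isTriangle_flip hxiy h (Ne.symm hzi)).2)

theorem mem_and_mem_of_lie_ne_zero {S : Set (Fin (m + 1))}
    (hS : ∀ {a b c}, a ∈ S → b ∈ S → IsTriangle e a b c → c ∈ S) {a b p q : Fin (m + 1)}
    (ha : a ∈ S) (hb : b ∈ S) (hab : a ≠ b) (hpq : p ≠ q) (h : ⁅e a b, e p q⁆ ≠ 0) :
    p ∈ S ∧ q ∈ S := by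
  by_cases hbp : b = p
  · subst hbp
    by_cases haq : a = q
    · exact ⟨hb, haq ▸ ha⟩
    · exact ⟨hb, hS ha hb ⟨hab, hpq, haq, h⟩⟩
  by_cases haq : a = q
  · subst haq
    have hpab : IsTriangle e p a b :=
      ⟨hpq, hab, Ne.symm hbp, fun h0 => h (by rw [← lie_skew, h0, neg_zero])⟩
    exact ⟨hS ha hb (he.isTriangle_rotate hpab), ha⟩
  · exact absurd (he.lie_eq_zero hab hpq hbp haq) h

theorem isTriangle (hij : i ≠ j) (hjl : j ≠ l) (hil : i ≠ l) : IsTriangle e i j l := by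
  let clique : Set (Fin (m + 1)) := {x | x = i ∨ x = j ∨ IsTriangle e i j x}
  let roots : Set (Fin m → ℤ) := {γ | ∃ a ∈ clique, ∃ b ∈ clique, a ≠ b ∧ γ = epsRoot a b}
  have roots_separated : ∀ γ ∈ roots, ∀ δ ∈ td.R, δ ∉ roots →
      ∀ x ∈ td.rs γ, ∀ y ∈ td.rs δ, ⁅x, y⁆ = 0 := by
    rintro _ ⟨a, ha, b, hb, hab, rfl⟩ δ hδ hδroots x hx y hy
    obtain ⟨p, q, hpq, rfl⟩ := (he.mem_R_iff δ).mp hδ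
    obtain ⟨c, rfl⟩ := he.exists_eq_smul hab hx
    obtain ⟨d, rfl⟩ := he.exists_eq_smul hpq hy
    suffices h : ⁅e a b, e p q⁆ = 0 by rw [smul_lie, lie_smul, h, smul_zero, smul_zero]
    by_contra h
    obtain ⟨hp, hq⟩ := he.mem_and_mem_of_lie_ne_zero he.triangle_closed ha hb hab hpq h
    exact hδroots ⟨p, hp, q, hq, hpq, rfl⟩
  have hil_mem : epsRoot i l ∈ roots :=
    td.mem_of_forall_lie_eq_zero (S := roots)
      ⟨epsRoot i j, ⟨i, Or.inl rfl, j, Or.inr (Or.inl rfl), hij, rfl⟩, he.epsRoot_mem_R hij⟩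
      roots_separated (he.epsRoot_mem_R hil)
  obtain ⟨a, -, b, hb, -, hab⟩ := hil_mem
  have hl : l ∈ clique := (epsRoot_injective hil hab).2 ▸ hb
  exact (hl.resolve_left hil.symm).resolve_left hjl.symm

end IsRootFrame

end Triangles

section Normalisation

variable {L : Type*} [LieRing L] [LieAlgebra ℂ L] {m : ℕ} {td : TriangularData L (Fin m)}
  {e : Fin (m + 1) → Fin (m + 1) → L}

/-- A root frame is normalised if its positive root vectors multiply like matrix units. -/
structure IsNormalisedFrame (td : TriangularData L (Fin m)) (e : Fin (m + 1) → Fin (m + 1) → L) :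
    Prop extends IsRootFrame td e where
  lie_eq : ∀ {i j l}, i < j → j < l → ⁅e i j, e j l⁆ = e i l

theorem IsRootFrame.smul (he : IsRootFrame td e) {c : Fin (m + 1) → Fin (m + 1) → ℂ}
    (hc : ∀ i j, c i j ≠ 0) : IsRootFrame td fun i j => c i j • e i j where
  mem_R_iff := he.mem_R_iff
  mem_rs hij := Submodule.smul_mem _ _ (he.mem_rs hij)
  ne_zero hij := smul_ne_zero (hc _ _) (he.ne_zero hij)

theorem IsRootFrame.exists_lie_zero_eq [FiniteDimensional ℂ L] [LieAlgebra.IsSimple ℂ L]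
    (he : IsRootFrame td e) : ∃ e', IsRootFrame td e' ∧
      ∀ {i j : Fin (m + 1)}, 0 < i → i < j → ⁅e' 0 i, e' i j⁆ = e' 0 j := by
  have factor : ∀ i j : Fin (m + 1), ∃ c : ℂ, c ≠ 0 ∧
      (0 < i → i < j → ⁅e 0 i, c • e i j⁆ = e 0 j) := by
    intro i j
    by_cases hij : 0 < i ∧ i < j
    · obtain ⟨h0i, hij⟩ := hij
      have h0j := (h0i.trans hij).ne
      obtain ⟨a, ha⟩ := he.exists_lie_eq_smul h0i.ne hij.ne h0j
      have ha0 : a ≠ 0 := fun h =>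
        (he.isTriangle h0i.ne hij.ne h0j).lie_ne_zero (by rw [ha, h, zero_smul])
      exact ⟨a⁻¹, inv_ne_zero ha0, fun _ _ => by rw [lie_smul, ha, inv_smul_smul₀ ha0]⟩
    · exact ⟨1, one_ne_zero, fun h0i hij' => absurd ⟨h0i, hij'⟩ hij⟩
  choose c hc hlie using factor
  refine ⟨_, he.smul (c := fun i j => if i = 0 then 1 else c i j) fun i j => ?_,
    fun {i j} hi hij => ?_⟩
  · split_ifs
    exacts [one_ne_zero, hc i j]
  · simpa only [if_pos, if_neg hi.ne', one_smul] using hlie i j hi hij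

theorem IsRootFrame.exists_isNormalisedFrame [FiniteDimensional ℂ L] [LieAlgebra.IsSimple ℂ L]
    (he : IsRootFrame td e) : ∃ e', IsNormalisedFrame td e' := by
  obtain ⟨e', he', h0⟩ := he.exists_lie_zero_eq
  refine ⟨e', he', fun {i j l} hij hjl => ?_⟩
  rcases (Fin.zero_le i).eq_or_lt with rfl | hi
  · exact h0 hij hjl
  have hil := hij.trans hjl
  obtain ⟨c, hc⟩ := he'.exists_lie_eq_smul hij.ne hjl.ne hil.ne
  have hc1 : c • e' 0 l = (1 : ℂ) • e' 0 l := by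
    calc c • e' 0 l = ⁅e' 0 i, ⁅e' i j, e' j l⁆⁆ := by rw [hc, lie_smul, h0 hi hil]
      _ = e' 0 l := by
        rw [leibniz_lie, h0 hi hij, h0 (hi.trans hij) hjl,
          he'.lie_eq_zero hi.ne hjl.ne hij.ne (hi.trans hil).ne, lie_zero, add_zero]
      _ = (1 : ℂ) • e' 0 l := (one_smul ℂ _).symm
  rw [hc, smul_left_injective ℂ (he'.ne_zero (hi.trans hil).ne) hc1, one_smul]

theorem exists_intv_eq_epsRoot {i j : Fin (m + 1)} (hij : i < j) :
    ∃ a b : Fin m, a ≤ b ∧ intv a b = epsRoot i j := by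
  have hj : j ≠ 0 := (i.zero_le.trans_lt hij).ne'
  have hle : i.castPred (hij.trans_le j.le_last).ne ≤ j.pred hj := by
    rw [Fin.le_def, Fin.coe_castPred, Fin.val_pred]
    exact Nat.le_sub_one_of_lt hij
  exact ⟨_, _, hle, by rw [intv_eq_epsRoot hle, Fin.castSucc_castPred, Fin.succ_pred]⟩

theorem exists_intv_or_neg_intv_iff {γ : Fin m → ℤ} :
    (∃ i j : Fin m, i ≤ j ∧ (γ = intv i j ∨ γ = -intv i j)) ↔
      ∃ i j, i ≠ j ∧ γ = epsRoot i j := by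
  constructor
  · rintro ⟨i, j, hij, rfl | rfl⟩
    · exact ⟨_, _, (Fin.castSucc_lt_succ_iff.mpr hij).ne, intv_eq_epsRoot hij⟩
    · refine ⟨_, _, (Fin.castSucc_lt_succ_iff.mpr hij).ne', ?_⟩
      rw [intv_eq_epsRoot hij, neg_epsRoot]
  · rintro ⟨i, j, hij, rfl⟩
    rcases hij.lt_or_gt with h | h <;> obtain ⟨a, b, hab, hroot⟩ := exists_intv_eq_epsRoot h
    · exact ⟨a, b, hab, Or.inl hroot.symm⟩
    · exact ⟨a, b, hab, Or.inr (by rw [hroot, neg_epsRoot])⟩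

theorem TriangularData.exists_isRootFrame (td : TriangularData L (Fin m))
    (hA : ∀ γ : Fin m → ℤ, γ ∈ td.R ↔ ∃ i j : Fin m, i ≤ j ∧ (γ = intv i j ∨ γ = -intv i j)) :
    ∃ e, IsRootFrame td e := by
  have mem_R_iff : ∀ γ, γ ∈ td.R ↔ ∃ i j, i ≠ j ∧ γ = epsRoot i j :=
    fun γ => (hA γ).trans exists_intv_or_neg_intv_iff
  have vector : ∀ i j, ∃ x : L, i ≠ j → x ∈ td.rs (epsRoot i j) ∧ x ≠ 0 := by
    intro i j
    by_cases hij : i = j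
    · exact ⟨0, fun h => absurd hij h⟩
    · obtain ⟨x, hx⟩ := td.exists_mem_rs_ne_zero ((mem_R_iff _).mpr ⟨i, j, hij, rfl⟩)
      exact ⟨x, fun _ => hx⟩
  choose e he using vector
  exact ⟨e, mem_R_iff, fun hij => (he _ _ hij).1, fun hij => (he _ _ hij).2⟩

end Normalisation

/-! ### Transfer to the matrix model -/

section Transfer

open IsNilpotent (exp)

open Matrix (single)

variable {m : ℕ} {T : Finset (Fin m)}

theorem TriangularData.mem_posR_iff {SR L : Type*} [Fintype SR] [DecidableEq SR] [LieRing L]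
    [LieAlgebra ℂ L] (td : TriangularData L SR) {γ : SR → ℤ} :
    γ ∈ td.posR ↔ γ ∈ td.R ∧ ∀ a, 0 ≤ γ a :=
  Finset.mem_filter

theorem TriangularData.mem_nilRoots_iff {SR L : Type*} [Fintype SR] [DecidableEq SR] [LieRing L]
    [LieAlgebra ℂ L] (td : TriangularData L SR) {T : Finset SR} {γ : SR → ℤ} :
    γ ∈ td.nilRoots T ↔ γ ∈ td.posR ∧ ∃ a ∈ T, 0 < γ a :=
  Finset.mem_filter

theorem mem_of_forall_single_mem {S : Submodule ℂ (Mat m)} {X : Mat m} (hX : X ∈ nilMatrices T)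
    (hS : ∀ i j, Separates T i j → single i j 1 ∈ S) : X ∈ S := by
  rw [Matrix.matrix_eq_sum_single X]
  refine S.sum_mem fun i _ => S.sum_mem fun j _ => ?_
  by_cases h : Separates T i j
  · rw [← mul_one (X i j), ← smul_eq_mul, ← Matrix.smul_single]
    exact S.smul_mem _ (hS i j h)
  · rw [hX i j h, Matrix.single_zero]
    exact S.zero_mem

theorem eq_of_forall_single_eq {M : Type*} [AddCommGroup M] [Module ℂ M] {f g : Mat m →ₗ[ℂ] M}
    (h : ∀ i j, Separates T i j → f (single i j 1) = g (single i j 1)) {X : Mat m}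
    (hX : X ∈ nilMatrices T) : f X = g X :=
  mem_of_forall_single_mem (S := LinearMap.eqLocus f g) hX h

theorem pow_mulLeft_sub_mulRight_mem_nilMatrices {X Y : Mat m} (hX : X ∈ nilMatrices T)
    (hY : Y ∈ nilMatrices T) (r : ℕ) :
    ((LinearMap.mulLeft ℂ X - LinearMap.mulRight ℂ X) ^ r) Y ∈ nilMatrices T := by
  induction r with
  | zero => exact hY
  | succ r ih =>
    rw [pow_succ', Module.End.mul_apply]
    exact sub_mem (mul_mem hX ih) (mul_mem ih hX)

variable {L : Type*} [LieRing L] [LieAlgebra ℂ L] {td : TriangularData L (Fin m)}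
  {e : Fin (m + 1) → Fin (m + 1) → L}

/-- The linear map sending the matrix units to the vectors of a frame. It is only of interest on
strictly upper triangular matrices, so the values `e i i` do not matter. -/
def frameMap (e : Fin (m + 1) → Fin (m + 1) → L) : Mat m →ₗ[ℂ] L :=
  (Matrix.stdBasis ℂ _ _).constr ℂ fun p => e p.1 p.2

theorem frameMap_single (i j : Fin (m + 1)) : frameMap e (single i j 1) = e i j := by
  rw [← Matrix.stdBasis_eq_single, frameMap, Basis.constr_basis]

namespace IsRootFrame

variable (he : IsRootFrame td e)
include he

theorem mem_posR_iff (γ : Fin m → ℤ) :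
    γ ∈ td.posR ↔ ∃ i j : Fin (m + 1), i < j ∧ γ = epsRoot i j := by
  rw [td.mem_posR_iff, he.mem_R_iff]
  constructor
  · rintro ⟨⟨i, j, hij, rfl⟩, hpos⟩
    refine ⟨i, j, lt_of_not_ge fun hji => ?_, rfl⟩
    have hji := lt_of_le_of_ne hji hij.symm
    have hneg := hpos (j.castPred (hji.trans_le i.le_last).ne)
    simp only [epsRoot, Fin.castSucc_castPred, if_neg hji.not_ge, le_refl, if_true] at hneg
    omega
  · rintro ⟨i, j, hij, rfl⟩
    refine ⟨⟨i, j, hij.ne, rfl⟩, fun a => ?_⟩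
    have := fun h : j ≤ a.castSucc => hij.le.trans h
    simp only [epsRoot]
    grind

theorem mem_nilRoots_iff (γ : Fin m → ℤ) :
    γ ∈ td.nilRoots T ↔ ∃ i j : Fin (m + 1), Separates T i j ∧ γ = epsRoot i j := by
  rw [td.mem_nilRoots_iff, he.mem_posR_iff]
  constructor
  · rintro ⟨⟨i, j, -, rfl⟩, a, ha, hpos⟩
    refine ⟨i, j, ⟨a, ha, ?_⟩, rfl⟩
    simp only [epsRoot, Fin.le_def, Fin.val_castSucc] at hpos
    split_ifs at hpos <;> omega
  · rintro ⟨i, j, hs, rfl⟩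
    refine ⟨⟨i, j, hs.lt, rfl⟩, ?_⟩
    obtain ⟨a, ha, hia, haj⟩ := hs
    refine ⟨a, ha, ?_⟩
    simp only [epsRoot, Fin.le_def, Fin.val_castSucc, if_pos hia, if_neg haj.not_ge, sub_zero,
      zero_lt_one]

theorem killingForm_frameMap [FiniteDimensional ℂ L] [LieAlgebra.IsKilling ℂ L] {X : Mat m}
    (hX : X ∈ nilMatrices T) {i j : Fin (m + 1)} (hij : i ≠ j) :
    killingForm ℂ L (e j i) (frameMap e X) = X i j * killingForm ℂ L (e j i) (e i j) := by
  refine eq_of_forall_single_eq (f := killingForm ℂ L (e j i) ∘ₗ frameMap e)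
    (g := (Matrix.entryLinearMap ℂ ℂ i j).smulRight (killingForm ℂ L (e j i) (e i j)))
    (fun p q hpq => ?_) hX
  rw [LinearMap.comp_apply, frameMap_single, LinearMap.smulRight_apply,
    Matrix.entryLinearMap_apply, Matrix.single_apply]
  split_ifs with h
  · rw [h.1, h.2, one_smul]
  · rw [zero_smul, he.killingForm_eq_zero hij.symm hpq.lt.ne h]

theorem injOn_frameMap [FiniteDimensional ℂ L] [LieAlgebra.IsKilling ℂ L] :
    Set.InjOn (frameMap e) (nilMatrices T : Set (Mat m)) := by
  intro X hX Y hY hXY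
  ext i j
  by_cases hs : Separates T i j
  · have hij := hs.lt.ne
    refine mul_right_cancel₀ (he.killingForm_ne_zero hij.symm) ?_
    rw [← he.killingForm_frameMap hX hij, ← he.killingForm_frameMap hY hij, hXY]
  · rw [hX i j hs, hY i j hs]

end IsRootFrame

namespace IsNormalisedFrame

variable (he : IsNormalisedFrame td e)
include he

theorem frameMap_single_lie {i j k l : Fin (m + 1)} (hij : i < j) (hkl : k < l) :
    frameMap e (single i j 1 * single k l 1 - single k l 1 * single i j 1) = ⁅e i j, e k l⁆ := by
  rw [map_sub]
  by_cases hjk : j = k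
  · subst hjk
    rw [Matrix.single_mul_single_same, mul_one, frameMap_single, he.lie_eq hij hkl,
      Matrix.single_mul_single_of_ne _ _ _ _ (hij.trans hkl).ne', map_zero, sub_zero]
  rw [Matrix.single_mul_single_of_ne _ _ _ _ hjk, map_zero, zero_sub]
  by_cases hli : l = i
  · subst hli
    rw [Matrix.single_mul_single_same, mul_one, frameMap_single, ← lie_skew, he.lie_eq hkl hij]
  · rw [Matrix.single_mul_single_of_ne _ _ _ _ hli, map_zero, neg_zero,
      he.lie_eq_zero hij.ne hkl.ne hjk (Ne.symm hli)]

theorem frameMap_lie {X Y : Mat m} (hX : X ∈ nilMatrices T) (hY : Y ∈ nilMatrices T) :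
    frameMap e (X * Y - Y * X) = ⁅frameMap e X, frameMap e Y⁆ := by
  have hright {i j : Fin (m + 1)} (hij : i < j) :
      frameMap e (single i j 1 * Y - Y * single i j 1) = ⁅e i j, frameMap e Y⁆ := by
    have h := eq_of_forall_single_eq (f := frameMap e ∘ₗ (LinearMap.mulLeft ℂ (single i j 1) -
      LinearMap.mulRight ℂ (single i j 1))) (g := LieAlgebra.ad ℂ L (e i j) ∘ₗ frameMap e)
      (fun k l hkl => ?_) hY
    · simpa only [LinearMap.comp_apply, LinearMap.sub_apply, LinearMap.mulLeft_apply,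
        LinearMap.mulRight_apply, LieAlgebra.ad_apply] using h
    · simpa only [LinearMap.comp_apply, LinearMap.sub_apply, LinearMap.mulLeft_apply,
        LinearMap.mulRight_apply, LieAlgebra.ad_apply, frameMap_single]
        using he.frameMap_single_lie hij hkl.lt
  have hleft := eq_of_forall_single_eq
    (f := frameMap e ∘ₗ (LinearMap.mulRight ℂ Y - LinearMap.mulLeft ℂ Y))
    (g := -(LieAlgebra.ad ℂ L (frameMap e Y) ∘ₗ frameMap e)) (fun i j hij => ?_) hX
  · simpa only [LinearMap.comp_apply, LinearMap.sub_apply, LinearMap.mulLeft_apply,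
      LinearMap.mulRight_apply, LinearMap.neg_apply, LieAlgebra.ad_apply, lie_skew] using hleft
  · simpa only [LinearMap.comp_apply, LinearMap.sub_apply, LinearMap.mulLeft_apply,
      LinearMap.mulRight_apply, LinearMap.neg_apply, LieAlgebra.ad_apply, lie_skew,
      frameMap_single] using hright hij.lt

theorem mem_nilrad_iff (x : L) : x ∈ td.nilrad T ↔ ∃ X ∈ nilMatrices T, frameMap e X = x := by
  constructor
  · let image : LieSubalgebra ℂ L :=
      { (nilMatrices T).toSubmodule.map (frameMap e) with
        lie_mem' := by
          rintro _ _ ⟨X, hX, rfl⟩ ⟨Y, hY, rfl⟩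
          exact ⟨X * Y - Y * X, sub_mem ((nilMatrices T).mul_mem hX hY)
            ((nilMatrices T).mul_mem hY hX), he.frameMap_lie hX hY⟩ }
    suffices h : td.nilrad T ≤ image from fun hx => h hx
    refine LieSubalgebra.lieSpan_le.mpr fun y hy => ?_
    obtain ⟨γ, hγ, hy⟩ := Set.mem_iUnion₂.mp hy
    obtain ⟨i, j, hs, rfl⟩ := (he.mem_nilRoots_iff γ).mp hγ
    obtain ⟨c, rfl⟩ := he.exists_eq_smul hs.lt.ne hy
    exact image.smul_mem c ⟨_, single_mem_nilMatrices hs 1, frameMap_single i j⟩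
  · rintro ⟨X, hX, rfl⟩
    refine mem_of_forall_single_mem hX (S := (td.nilrad T).toSubmodule.comap (frameMap e))
      fun i j hij => LieSubalgebra.subset_lieSpan (Set.mem_biUnion (x := epsRoot i j) ?_ ?_)
    · exact (he.mem_nilRoots_iff _).mpr ⟨i, j, hij, rfl⟩
    · rw [frameMap_single]
      exact he.mem_rs hij.lt.ne

theorem ad_frameMap_pow_apply {X Y : Mat m} (hX : X ∈ nilMatrices T) (hY : Y ∈ nilMatrices T)
    (r : ℕ) : (LieAlgebra.ad ℂ L (frameMap e X) ^ r) (frameMap e Y) =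
      frameMap e (((LinearMap.mulLeft ℂ X - LinearMap.mulRight ℂ X) ^ r) Y) := by
  induction r with
  | zero => rfl
  | succ r ih =>
    rw [pow_succ', Module.End.mul_apply, ih, LieAlgebra.ad_apply, ← he.frameMap_lie hX
      (pow_mulLeft_sub_mulRight_mem_nilMatrices hX hY r), pow_succ' (_ - _), Module.End.mul_apply]
    rfl

variable [FiniteDimensional ℂ L] [LieAlgebra.IsKilling ℂ L]

theorem nilExp_ad_frameMap {X Y : Mat m} (hX : X ∈ nilMatrices T) (hY : Y ∈ nilMatrices T) :
    nilExp (LieAlgebra.ad ℂ L (frameMap e X)) (frameMap e Y) =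
      frameMap e (exp X * Y * exp (-X)) := by
  have hXnil := isNilpotent_of_mem_nilMatrices hX
  obtain ⟨N, hN⟩ : IsNilpotent (LinearMap.mulLeft ℂ X - LinearMap.mulRight ℂ X) :=
    (LinearMap.commute_mulLeft_right X X).isNilpotent_sub
      ((LinearMap.isNilpotent_mulLeft_iff ℂ X).2 hXnil)
      ((LinearMap.isNilpotent_mulRight_iff ℂ X).2 hXnil)
  have vanish : ∀ r, finrank ℂ L + 1 ≤ r →
      ((LinearMap.mulLeft ℂ X - LinearMap.mulRight ℂ X) ^ r) Y = 0 := by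
    intro r hr
    refine he.injOn_frameMap (pow_mulLeft_sub_mulRight_mem_nilMatrices hX hY r) (zero_mem _) ?_
    rw [← he.ad_frameMap_pow_apply hX hY, map_zero, ← LinearMap.mem_ker,
      Module.End.ker_pow_eq_ker_pow_finrank_of_le (by omega),
      ← Module.End.ker_pow_eq_ker_pow_finrank_of_le (Nat.le_add_right (finrank ℂ L) N),
      LinearMap.mem_ker, he.ad_frameMap_pow_apply hX hY, pow_add, hN, mul_zero,
      LinearMap.zero_apply, map_zero]
  rw [← sum_inv_factorial_smul_pow_mulLeft_sub_mulRight hXnil vanish,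
    nilExp, LinearMap.sum_apply, map_sum]
  refine Finset.sum_congr rfl fun r _ => ?_
  rw [LinearMap.smul_apply, he.ad_frameMap_pow_apply hX hY, map_smul]

omit [FiniteDimensional ℂ L] [LieAlgebra.IsKilling ℂ L] in
theorem coe_killStab (w : L) : (killStab w (td.nilrad T) (td.nilrad T) : Set L) =
    frameMap e '' coadjointStab T (killingForm ℂ L w ∘ₗ frameMap e) := by
  ext x
  constructor
  · rintro ⟨hx, hstab⟩
    obtain ⟨X, hX, rfl⟩ := (he.mem_nilrad_iff x).mp hx
    refine ⟨X, ⟨hX, fun Y hY => ?_⟩, rfl⟩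
    rw [LinearMap.comp_apply, he.frameMap_lie hX hY]
    exact hstab _ ((he.mem_nilrad_iff _).mpr ⟨Y, hY, rfl⟩)
  · rintro ⟨X, ⟨hX, hstab⟩, rfl⟩
    refine ⟨(he.mem_nilrad_iff _).mpr ⟨X, hX, rfl⟩, fun y hy => ?_⟩
    obtain ⟨Y, hY, rfl⟩ := (he.mem_nilrad_iff y).mp hy
    rw [← he.frameMap_lie hX hY]
    exact hstab Y hY

theorem map_nilExp_killStab_eq_iff {X : Mat m} (hX : X ∈ nilMatrices T) (v w : L) :
    (killStab v (td.nilrad T) (td.nilrad T)).map (nilExp (LieAlgebra.ad ℂ L (frameMap e X))) =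
        killStab w (td.nilrad T) (td.nilrad T) ↔
      (fun Z => exp X * Z * exp (-X)) '' coadjointStab T (killingForm ℂ L v ∘ₗ frameMap e) =
        coadjointStab T (killingForm ℂ L w ∘ₗ frameMap e) := by
  have hneg : exp (-X) - 1 ∈ nilMatrices T := exp_sub_one_mem_nilMatrices (neg_mem hX)
  rw [← SetLike.coe_set_eq, Submodule.map_coe, he.coe_killStab, he.coe_killStab, Set.image_image,
    Set.image_congr fun Z hZ => he.nilExp_ad_frameMap hX hZ.1,
    ← Set.image_image (frameMap e) fun Z => exp X * Z * exp (-X)]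
  refine (he.injOn_frameMap (T := T)).image_eq_image_iff ?_ fun Z hZ => hZ.1
  rintro _ ⟨Z, hZ, rfl⟩
  exact mul_mul_mem_nilMatrices (exp_sub_one_mem_nilMatrices hX) hneg hZ.1

end IsNormalisedFrame

end Transfer

/-! ### The Kostant cascade in type A -/

section Cascade

variable {m : ℕ}

theorem TriangularData.mem_heisRoots_iff {SR L : Type*} [Fintype SR] [DecidableEq SR] [LieRing L]
    [LieAlgebra ℂ L] (td : TriangularData L SR) {β γ : SR → ℤ} :
    γ ∈ td.heisRoots β ↔ γ ∈ td.posR ∧ fsupp γ ⊆ fsupp β ∧ (γ = β ∨ β - γ ∈ td.R) :=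
  Finset.mem_filter

theorem mem_fsupp_epsRoot {i j : Fin (m + 1)} (hij : i < j) (a : Fin m) :
    a ∈ fsupp (epsRoot i j) ↔ (i : ℕ) ≤ a ∧ (a : ℕ) < j := by
  simp only [fsupp, Finset.mem_filter_univ, epsRoot, Fin.le_def, Fin.val_castSucc]
  grind

theorem le_of_fsupp_epsRoot_subset {i j p q : Fin (m + 1)} (hij : i < j) (hpq : p < q)
    (h : fsupp (epsRoot i j) ⊆ fsupp (epsRoot p q)) : p ≤ i ∧ j ≤ q := by
  have hsub (a : Fin m) (hia : (i : ℕ) ≤ a) (haj : (a : ℕ) < j) : (p : ℕ) ≤ a ∧ (a : ℕ) < q :=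
    (mem_fsupp_epsRoot hpq a).mp (h ((mem_fsupp_epsRoot hij a).mpr ⟨hia, haj⟩))
  rw [Fin.lt_def] at hij
  have hfirst := hsub ⟨i, by omega⟩ le_rfl hij
  have hlast := hsub ⟨j - 1, by omega⟩ (Nat.le_sub_one_of_lt hij) (by grind)
  grind

variable {L : Type*} [LieRing L] [LieAlgebra ℂ L] {td : TriangularData L (Fin m)}
  {e : Fin (m + 1) → Fin (m + 1) → L} {K : Finset (Fin m → ℤ)} {T : Finset (Fin m)} {k : ℕ}
  {v : L}

theorem TriangularData.IsCascadePoint.mem_negNilSub (hv : td.IsCascadePoint K T v) :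
    v ∈ td.negNilSub T := by
  obtain ⟨c, hc, rfl⟩ := hv
  refine sum_mem fun β hβ =>
    Submodule.mem_iSup_of_mem (-β) (Submodule.mem_iSup_of_mem ?_ (hc β hβ).1)
  exact ⟨β, (Finset.mem_inter.mp hβ).2, rfl⟩

namespace IsRootFrame

variable (he : IsRootFrame td e) (hK : td.IsCascade K)
include he

theorem mem_negNilSub {i j : Fin (m + 1)} (hij : Separates T i j) : e j i ∈ td.negNilSub T := by
  refine Submodule.mem_iSup_of_mem (epsRoot j i)
    (Submodule.mem_iSup_of_mem ?_ (he.mem_rs hij.lt.ne'))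
  exact ⟨_, (he.mem_nilRoots_iff _).mpr ⟨i, j, hij, rfl⟩, neg_epsRoot i j⟩

include hK

theorem exists_lt_of_mem_cascade {β : Fin m → ℤ} (hβ : β ∈ K) :
    ∃ i j : Fin (m + 1), i < j ∧ β = epsRoot i j :=
  (he.mem_posR_iff β).mp (hK.subset_pos hβ)

theorem eq_and_eq_of_mem_cascade {p q p' q' : Fin (m + 1)} (hpq : p < q) (h : epsRoot p q ∈ K)
    (h' : epsRoot p' q' ∈ K) (hs : p = p' ∨ q = q') : p = p' ∧ q = q' := by
  by_contra hne
  refine (hK.strong_orth _ h _ h' fun h₀ => hne (epsRoot_injective hpq.ne h₀)).2 ?_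
  rw [he.mem_R_iff, sub_eq_add_neg, neg_epsRoot]
  rcases hs with rfl | rfl
  · exact ⟨q', q, fun h₀ => hne ⟨rfl, h₀.symm⟩, by rw [add_comm, epsRoot_add_epsRoot]⟩
  · exact ⟨p, p', fun h₀ => hne ⟨h₀, rfl⟩, epsRoot_add_epsRoot _ _ _⟩

theorem exists_mem_cascade {i j : Fin (m + 1)} (hij : i < j) :
    ∃ p q, p ≤ i ∧ j ≤ q ∧ (p = i ∨ q = j) ∧ epsRoot p q ∈ K := by
  obtain ⟨β, ⟨hβ, hheis⟩, -⟩ := hK.partition _ ((he.mem_posR_iff _).mpr ⟨i, j, hij, rfl⟩)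
  obtain ⟨p, q, hpq, rfl⟩ := he.exists_lt_of_mem_cascade hK hβ
  obtain ⟨-, hsub, hdiff⟩ := td.mem_heisRoots_iff.mp hheis
  obtain ⟨hpi, hjq⟩ := le_of_fsupp_epsRoot_subset hij hpq hsub
  refine ⟨p, q, hpi, hjq, ?_, hβ⟩
  rcases hdiff with heq | hdiff
  · exact Or.inl (epsRoot_injective hij.ne heq).1.symm
  · rw [he.mem_R_iff, sub_eq_add_neg, neg_epsRoot] at hdiff
    obtain ⟨x, y, -, hxy⟩ := hdiff
    by_contra! hne
    exact epsRoot_add_epsRoot_ne hpq.ne hij.ne' hne.2 hne.1 x y hxy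

theorem epsRoot_rev_mem_cascade (i : Fin (m + 1)) (hi : 2 * (i : ℕ) < m) :
    epsRoot i i.rev ∈ K := by
  induction i using WellFoundedLT.induction with
  | _ i ih =>
    have hlt : i < i.rev := by rw [Fin.lt_def, Fin.val_rev]; omega
    obtain ⟨p, q, hpi, hiq, hend, hmem⟩ := he.exists_mem_cascade hK hlt
    have hpq : p < q := hpi.trans_lt (hlt.trans_le hiq)
    obtain rfl : p = i := by
      by_contra hne
      have hp : p < i := lt_of_le_of_ne hpi hne
      have hq := (he.eq_and_eq_of_mem_cascade hK hpq hmem (ih p hp (by omega)) (Or.inl rfl)).2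
      exact hne (hend.elim id fun h => Fin.rev_injective (hq.symm.trans h))
    obtain rfl : q = p.rev := by
      by_contra hne
      have hq : q.rev < p := Fin.rev_lt_iff.mpr (lt_of_le_of_ne hiq (Ne.symm hne))
      have hmem' := ih q.rev hq (by omega)
      rw [Fin.rev_rev] at hmem'
      exact hq.ne' (he.eq_and_eq_of_mem_cascade hK hpq hmem hmem' (Or.inr rfl)).1
    exact hmem

theorem mem_cascade_iff {β : Fin m → ℤ} :
    β ∈ K ↔ ∃ i : Fin (m + 1), 2 * (i : ℕ) < m ∧ β = epsRoot i i.rev := by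
  refine ⟨fun hβ => ?_, fun ⟨i, hi, h⟩ => h ▸ he.epsRoot_rev_mem_cascade hK i hi⟩
  obtain ⟨p, q, hpq, rfl⟩ := he.exists_lt_of_mem_cascade hK hβ
  rw [Fin.lt_def] at hpq
  rcases Nat.lt_or_ge m ((p : ℕ) + q) with h | h
  · have hq : 2 * (q.rev : ℕ) < m := by rw [Fin.val_rev]; omega
    have hmem := he.epsRoot_rev_mem_cascade hK q.rev hq
    have hp := (he.eq_and_eq_of_mem_cascade hK hpq hβ hmem (Or.inr (Fin.rev_rev q).symm)).1
    exact ⟨q.rev, hq, by rw [Fin.rev_rev, ← hp]⟩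
  · have hmem := he.epsRoot_rev_mem_cascade hK p (by omega)
    exact ⟨p, by omega, by rw [← (he.eq_and_eq_of_mem_cascade hK hpq hβ hmem (Or.inl rfl)).2]⟩

theorem epsRoot_rev_mem_cascadeK_iff {i : Fin (m + 1)} (hi : 2 * (i : ℕ) < m) :
    epsRoot i i.rev ∈ td.cascadeK K T ↔ Separates T i i.rev := by
  have hlt : i < i.rev := by rw [Fin.lt_def, Fin.val_rev]; omega
  rw [TriangularData.cascadeK, Finset.mem_inter, he.mem_nilRoots_iff,
    and_iff_right (he.epsRoot_rev_mem_cascade hK i hi)]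
  refine ⟨fun ⟨p, q, hs, h⟩ => ?_, fun hs => ⟨i, _, hs, rfl⟩⟩
  obtain ⟨rfl, rfl⟩ := epsRoot_injective hlt.ne h
  exact hs

variable (hcasc : ∀ j : Fin m, intv j j.rev ∈ td.cascadeK K T ↔ (j : ℕ) < k)
include hcasc

theorem separates_rev_iff {i : Fin (m + 1)} (hi : 2 * (i : ℕ) < m) :
    Separates T i i.rev ↔ (i : ℕ) < k := by
  have hle : i.castPred (by grind) ≤ (i.castPred (by grind)).rev := by
    rw [Fin.le_def, Fin.val_rev, Fin.coe_castPred]; omega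
  have h := hcasc (i.castPred (by grind))
  rwa [intv_eq_epsRoot hle, ← Fin.rev_castSucc, Fin.castSucc_castPred,
    he.epsRoot_rev_mem_cascadeK_iff hK hi] at h

theorem mem_cascadeK_iff (hk : 2 * k ≤ m + 1) {β : Fin m → ℤ} :
    β ∈ td.cascadeK K T ↔ ∃ i : Fin (m + 1), (i : ℕ) < k ∧ β = epsRoot i i.rev := by
  constructor
  · intro hβ
    obtain ⟨i, hi, rfl⟩ := (he.mem_cascade_iff hK).mp (Finset.mem_inter.mp hβ).1
    rw [he.epsRoot_rev_mem_cascadeK_iff hK hi, he.separates_rev_iff hK hcasc hi] at hβ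
    exact ⟨i, hβ, rfl⟩
  · rintro ⟨i, hi, rfl⟩
    have hi' : 2 * (i : ℕ) < m := by omega
    rwa [he.epsRoot_rev_mem_cascadeK_iff hK hi', he.separates_rev_iff hK hcasc hi']

theorem outer_of_cascade {a : Fin m} (ha : a ∈ T) : (a : ℕ) + 1 ≤ k ∨ m ≤ (a : ℕ) + k := by
  have hsep {i : Fin (m + 1)} (hi : 2 * (i : ℕ) < m) := he.separates_rev_iff hK hcasc hi
  rcases Nat.lt_or_ge (2 * (a : ℕ)) m with h | h
  · exact Or.inl ((hsep (i := a.castSucc) h).mp ⟨a, ha, le_rfl, by grind⟩)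
  · have := (hsep (i := a.rev.castSucc) (by grind)).mp ⟨a, ha, by grind, by grind⟩
    grind

theorem isCascadeShape (hk : 2 * k ≤ m + 1) (hpos : 0 < k) : IsCascadeShape T k where
  two_mul_le := hk
  outer _ := he.outer_of_cascade hK hcasc
  inner := by
    obtain ⟨a, ha, hka, hak⟩ := (he.separates_rev_iff hK hcasc (i := ⟨k - 1, by omega⟩)
      (by grind)).mpr (Nat.sub_one_lt_of_lt hpos)
    exact ⟨a, ha, by grind, by grind⟩

theorem isCascadeFunctional [FiniteDimensional ℂ L] [LieAlgebra.IsKilling ℂ L]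
    (hk : 2 * k ≤ m + 1) (hv : td.IsCascadePoint K T v) :
    IsCascadeFunctional T k (killingForm ℂ L v ∘ₗ frameMap e) := by
  obtain ⟨c, hc, rfl⟩ := hv
  have hK_iff {β : Fin m → ℤ} := he.mem_cascadeK_iff hK hcasc hk (β := β)
  have hrev {i : Fin (m + 1)} (hi : (i : ℕ) < k) : i ≠ i.rev := by grind
  have hcoeff {i : Fin (m + 1)} (hi : (i : ℕ) < k) :
      ∃ b : ℂ, b ≠ 0 ∧ c (epsRoot i i.rev) = b • e i.rev i := by
    obtain ⟨hmem, hne⟩ := hc _ (hK_iff.mpr ⟨i, hi, rfl⟩)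
    rw [neg_epsRoot] at hmem
    obtain ⟨b, hb⟩ := he.exists_eq_smul (hrev hi).symm hmem
    exact ⟨b, fun hb₀ => hne (by rw [hb, hb₀, zero_smul]), hb⟩
  have hzero {β : Fin m → ℤ} (hβ : β ∈ td.cascadeK K T) {p q : Fin (m + 1)} (hpq : p ≠ q)
      (hne : β ≠ epsRoot p q) : killingForm ℂ L (c β) (e p q) = 0 := by
    obtain ⟨i, hi, rfl⟩ := hK_iff.mp hβ
    obtain ⟨b, -, hb⟩ := hcoeff hi
    rw [hb, map_smul, LinearMap.smul_apply, he.killingForm_eq_zero (hrev hi).symm hpq, smul_zero]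
    exact fun h => hne (by rw [h.1, h.2])
  constructor
  · intro i j hs hij
    rw [LinearMap.comp_apply, frameMap_single, map_sum, LinearMap.sum_apply]
    refine Finset.sum_eq_zero fun β hβ => hzero hβ hs.lt.ne fun h => hij ?_
    obtain ⟨p, hp, rfl⟩ := hK_iff.mp hβ
    obtain ⟨rfl, rfl⟩ := epsRoot_injective (hrev hp) h
    exact ⟨rfl, hp⟩
  · intro i hi
    have hmem := hK_iff.mpr ⟨i, hi, rfl⟩
    obtain ⟨b, hb₀, hb⟩ := hcoeff hi
    rw [LinearMap.comp_apply, frameMap_single, map_sum, LinearMap.sum_apply,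
      Finset.sum_eq_single_of_mem _ hmem fun β hβ hne => hzero hβ (hrev hi) hne, hb, map_smul,
      LinearMap.smul_apply]
    exact smul_ne_zero hb₀ (he.killingForm_ne_zero (hrev hi).symm)

end IsRootFrame

theorem image_rev_filter_eq_iff_isOuterSymmetric :
    (T.filter fun a : Fin m => (a : ℕ) + 2 ≤ k).image Fin.rev =
        T.filter (fun a : Fin m => m + 1 ≤ (a : ℕ) + k) ↔ IsOuterSymmetric T k := by
  simp only [Finset.ext_iff, Finset.mem_image, Finset.mem_filter]
  constructor
  · rintro h a ha (hak | hak)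
    · exact ((h a.rev).mp ⟨a, ⟨ha, hak⟩, rfl⟩).1
    · obtain ⟨b, hb, rfl⟩ := (h a).mpr ⟨ha, hak⟩
      rw [Fin.rev_rev]
      exact hb.1
  · refine fun h b => ⟨?_, fun ⟨hb, hbk⟩ =>
      ⟨b.rev, ⟨h b hb (Or.inr hbk), by grind⟩, Fin.rev_rev b⟩⟩
    rintro ⟨a, ⟨ha, hak⟩, rfl⟩
    exact ⟨h a ha (Or.inl hak), by grind⟩

theorem isOuterSymmetric_of_image_rev_eq (h : T.image Fin.rev = T) : IsOuterSymmetric T k :=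
  fun _ ha _ => h ▸ Finset.mem_image_of_mem Fin.rev ha

end Cascade

/-! ### Genericity of cascade points -/

section Genericity

open IsNilpotent (exp exp_mul_exp_neg_self exp_neg_mul_exp_self)

open Matrix (single)

variable {m : ℕ} {T : Finset (Fin m)} {k : ℕ} {f g : Mat m →ₗ[ℂ] ℂ}

theorem mul_mul_mem_coadjointStab {U V Z : Mat m} (hU : U - 1 ∈ nilMatrices T)
    (hV : V - 1 ∈ nilMatrices T) (hUV : U * V = 1)
    (hZ : Z ∈ coadjointStab T (g ∘ₗ LinearMap.mulRight ℂ V ∘ₗ LinearMap.mulLeft ℂ U)) :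
    U * Z * V ∈ coadjointStab T g := by
  refine ⟨mul_mul_mem_nilMatrices hU hV hZ.1, fun Y hY => ?_⟩
  have h := hZ.2 _ (mul_mul_mem_nilMatrices hV hU hY)
  have hcomm : U * (Z * (V * Y * U) - V * Y * U * Z) * V = U * Z * V * Y - Y * (U * Z * V) := by
    calc _ = U * Z * V * Y * (U * V) - U * V * Y * U * Z * V := by noncomm_ring
      _ = _ := by rw [hUV, mul_one, one_mul]; noncomm_ring
  rwa [LinearMap.comp_apply, LinearMap.comp_apply, LinearMap.mulLeft_apply,
    LinearMap.mulRight_apply, hcomm] at h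

/-- The alternating form `(X, Y) ↦ f ⁅X, Y⁆` on `n_T`, whose kernel is the stabiliser of `f`. -/
def commutatorForm (T : Finset (Fin m)) :
    (Mat m →ₗ[ℂ] ℂ) →ₗ[ℂ] (nilMatrices T).toSubmodule →ₗ[ℂ] (nilMatrices T).toSubmodule →ₗ[ℂ] ℂ :=
  LinearMap.mk₂ ℂ (fun f X => f ∘ₗ
      (LinearMap.mulLeft ℂ X.1 - LinearMap.mulRight ℂ X.1) ∘ₗ (nilMatrices T).toSubmodule.subtype)
    (fun _ _ _ => rfl) (fun _ _ _ => rfl)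
    (fun f X Y => by
      ext Z
      simp only [Submodule.coe_add, LinearMap.comp_apply, Submodule.coe_subtype,
        LinearMap.sub_apply, LinearMap.mulLeft_apply, LinearMap.mulRight_apply, add_mul, mul_add,
        map_sub, map_add, LinearMap.add_apply]
      ring)
    (fun c f X => by
      ext Z
      simp [mul_sub])

theorem coe_map_ker_commutatorForm (f : Mat m →ₗ[ℂ] ℂ) :
    ((LinearMap.ker (commutatorForm T f)).map (nilMatrices T).toSubmodule.subtype : Set (Mat m)) =
      coadjointStab T f := by
  ext X
  constructor
  · rintro ⟨X, hX, rfl⟩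
    exact ⟨X.2, fun Y hY => LinearMap.congr_fun hX ⟨Y, hY⟩⟩
  · rintro ⟨hX, hf⟩
    exact ⟨⟨X, hX⟩, LinearMap.ext fun Y => hf Y Y.2, rfl⟩

theorem image_mul_mul_coadjointStab_eq {U V : Mat m} (hVU : V * U = 1)
    (hsub : ∀ Z ∈ coadjointStab T f, U * Z * V ∈ coadjointStab T g)
    (hrank : finrank ℂ (LinearMap.ker (commutatorForm T g)) ≤
      finrank ℂ (LinearMap.ker (commutatorForm T f))) :
    (fun Z => U * Z * V) '' coadjointStab T f = coadjointStab T g := by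
  simp only [← coe_map_ker_commutatorForm] at hsub ⊢
  let conj : Mat m →ₗ[ℂ] Mat m := LinearMap.mulRight ℂ V ∘ₗ LinearMap.mulLeft ℂ U
  have hinj : Function.Injective conj := by
    refine Function.LeftInverse.injective (g := fun Z => V * Z * U) fun Z => ?_
    change V * (U * Z * V) * U = Z
    calc V * (U * Z * V) * U = V * U * Z * (V * U) := by noncomm_ring
      _ = Z := by rw [hVU, one_mul, mul_one]
  refine congrArg SetLike.coe (Submodule.eq_of_le_of_finrank_le
    (S₁ := Submodule.map conj _) (Submodule.map_le_iff_le_comap.2 hsub) ?_)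
  rwa [← (Submodule.equivMapOfInjective conj hinj _).finrank_eq,
    Submodule.finrank_map_subtype_eq, Submodule.finrank_map_subtype_eq]

theorem exists_conj_mem_coadjointStab (hT : IsCascadeShape T k) (hsym : IsOuterSymmetric T k)
    (hf : IsCascadeFunctional T k f) (hg : ∀ a ∈ T, (a : ℕ) + 2 ≤ k →
      ((valueMatrix g).toSquareBlockProp (· ≤ a.castSucc)).det ≠ 0) :
    ∃ X ∈ nilMatrices T, ∀ Z ∈ coadjointStab T f, exp X * Z * exp (-X) ∈ coadjointStab T g := by
  obtain ⟨X, hX, hzero⟩ := exists_map_exp_conj_single_eq_zero hT hsym g hg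
  refine ⟨X, hX, fun Z hZ => ?_⟩
  refine mul_mul_mem_coadjointStab (exp_sub_one_mem_nilMatrices hX)
    (exp_sub_one_mem_nilMatrices (neg_mem hX))
    (exp_mul_exp_neg_self (isNilpotent_of_mem_nilMatrices hX)) ?_
  exact mem_coadjointStab_of_isStabPosition hT hsym hzero
    fun p q hpq => hf.apply_eq_zero hT hsym hZ hpq

theorem IsCascadeFunctional.det_valueMatrix_ne_zero (hf : IsCascadeFunctional T k f) {a : Fin m}
    (ha : a ∈ T) (hk : 2 * k ≤ m + 1) (hak : (a : ℕ) + 2 ≤ k) :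
    ((valueMatrix f).toSquareBlockProp (· ≤ a.castSucc)).det ≠ 0 := by
  have hle (p : {p : Fin (m + 1) // p ≤ a.castSucc}) : (p : ℕ) ≤ a := p.2
  have hdiag : (valueMatrix f).toSquareBlockProp (· ≤ a.castSucc) =
      Matrix.diagonal fun p => f (single p.1 p.1.rev 1) := by
    ext p q
    by_cases hpq : p = q
    · subst hpq
      exact (Matrix.diagonal_apply_eq _ _).symm
    rw [Matrix.diagonal_apply_ne _ hpq]
    refine hf.map_single_eq_zero _ _ ⟨a, ha, hle p, ?_⟩ fun h => hpq (Subtype.ext ?_)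
    · have := hle q
      rw [Fin.val_rev]
      omega
    · exact (Fin.rev_injective h.1).symm
  rw [hdiag, Matrix.det_diagonal, Finset.prod_ne_zero_iff]
  intro p _
  have := hle p
  exact hf.map_single_rev_ne_zero _ (by omega)

variable {L : Type*} [LieRing L] [LieAlgebra ℂ L] {td : TriangularData L (Fin m)}
  {e : Fin (m + 1) → Fin (m + 1) → L} {v : L}

variable [FiniteDimensional ℂ L]

theorem IsNormalisedFrame.isGenericStabPoint [LieAlgebra.IsKilling ℂ L]
    (he : IsNormalisedFrame td e) (hT : IsCascadeShape T k)
    (hsym : IsOuterSymmetric T k) (hv : v ∈ td.negNilSub T)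
    (hf : IsCascadeFunctional T k (killingForm ℂ L v ∘ₗ frameMap e)) :
    td.IsGenericStabPoint T (td.nilrad T) v := by
  let φ : td.negNilSub T →ₗ[ℂ] Mat m →ₗ[ℂ] ℂ :=
    LinearMap.lcomp ℂ ℂ (frameMap e) ∘ₗ killingForm ℂ L ∘ₗ (td.negNilSub T).subtype
  let T' := T.filter fun a : Fin m => (a : ℕ) + 2 ≤ k
  let minor (a : Fin m) (w : td.negNilSub T) : ℂ :=
    ((valueMatrix (φ w)).toSquareBlockProp (· ≤ a.castSucc)).det
  have hminor (a : Fin m) : minor a ∈ polyFunctions (td.negNilSub T) :=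
    matrix_det_mem_polyFunctions
      { toFun := fun w => (valueMatrix (φ w)).toSquareBlockProp (· ≤ a.castSucc)
        map_add' := fun u w => by rw [map_add]; rfl
        map_smul' := fun c w => by rw [map_smul]; rfl }
  obtain ⟨p, hp, hpv, hrank⟩ := exists_polyFunction_finrank_ker_le (commutatorForm T ∘ₗ φ) ⟨v, hv⟩
  have hP : (∏ a ∈ T', minor a) * p ∈ polyFunctions (td.negNilSub T) :=
    mul_mem (prod_mem fun a _ => hminor a) hp
  have hPv : ((∏ a ∈ T', minor a) * p) ⟨v, hv⟩ ≠ 0 := by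
    rw [Pi.mul_apply, Finset.prod_apply]
    refine mul_ne_zero (Finset.prod_ne_zero_iff.2 fun a ha => ?_) hpv
    obtain ⟨haT, hak⟩ := Finset.mem_filter.1 ha
    exact hf.det_valueMatrix_ne_zero haT hT.two_mul_le hak
  refine ⟨_, zOpen_ne_zero hP, zDense_ne_zero hP hPv, ⟨hv, hPv⟩, fun w hw => ?_⟩
  have hw' := mul_ne_zero_iff.1 hw
  rw [Finset.prod_apply, Finset.prod_ne_zero_iff] at hw'
  obtain ⟨X, hX, hconj⟩ := exists_conj_mem_coadjointStab hT hsym hf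
    (g := φ w) fun a ha hak => hw'.1 a (Finset.mem_filter.2 ⟨ha, hak⟩)
  refine ⟨frameMap e X, (he.mem_nilrad_iff _).2 ⟨X, hX, rfl⟩,
    (he.map_nilExp_killStab_eq_iff hX v w).2 (image_mul_mul_coadjointStab_eq ?_ hconj ?_)⟩
  · exact exp_neg_mul_exp_self (isNilpotent_of_mem_nilMatrices hX)
  · exact hrank w hw'.2

omit [FiniteDimensional ℂ L] in
theorem isGenericStabPoint_empty (hv : v ∈ td.negNilSub ∅) :
    td.IsGenericStabPoint ∅ (td.nilrad ∅) v := by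
  have hnil : td.nilrad ∅ = ⊥ := by
    simp [TriangularData.nilrad, TriangularData.nilRoots]
  have hstab (w : L) : killStab w (td.nilrad ∅) (td.nilrad ∅) = ⊥ := by
    rw [hnil]
    exact (Submodule.eq_bot_iff _).2 fun x hx => (LieSubalgebra.mem_bot x).1 hx.1
  have hone : (1 : td.negNilSub ∅ → ℂ) ∈ polyFunctions (td.negNilSub ∅) := one_mem _
  refine ⟨_, zOpen_ne_zero hone, zDense_ne_zero (v := 0) hone one_ne_zero,
    ⟨hv, one_ne_zero⟩, fun w _ => ⟨0, zero_mem _, ?_⟩⟩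
  rw [hstab, hstab, Submodule.map_bot]

end Genericity

/-! ### Failure of genericity without the symmetry -/

section NonGenericity

open IsNilpotent (exp exp_mul_exp_neg_self exp_neg_mul_exp_self)

open Matrix (single entryLinearMap)

variable {m : ℕ} {T : Finset (Fin m)} {k : ℕ} {f g : Mat m →ₗ[ℂ] ℂ}

theorem coadjointStab_congr (h : ∀ X ∈ nilMatrices T, f X = g X) :
    coadjointStab T f = coadjointStab T g := by
  ext X
  refine and_congr_right fun hX => forall₂_congr fun Y hY => ?_
  rw [h _ (sub_mem (mul_mem hX hY) (mul_mem hY hX))]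

theorem add_smul_entryLinearMap_single (f : Mat m →ₗ[ℂ] ℂ) (s : ℂ) (p q i j : Fin (m + 1)) :
    (f + s • entryLinearMap ℂ ℂ p q) (single i j 1) =
      f (single i j 1) + if i = p ∧ j = q then s else 0 := by
  rw [LinearMap.add_apply, LinearMap.smul_apply, Matrix.entryLinearMap_apply, Matrix.single_apply,
    smul_eq_mul, mul_ite, mul_one, mul_zero]

theorem IsCascadeShape.image_rev (hT : IsCascadeShape T k) :
    IsCascadeShape (T.image Fin.rev) k where
  two_mul_le := hT.two_mul_le
  outer := Finset.forall_mem_image.2 fun a ha => by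
    have := hT.outer a ha
    rw [Fin.val_rev]
    omega
  inner := by
    obtain ⟨a, ha, h⟩ := hT.inner
    exact ⟨a.rev, Finset.mem_image_of_mem _ ha, by rw [Fin.val_rev]; omega⟩

namespace IsCascadeFunctional

theorem sub_smul_single_mem_coadjointStab (hf : IsCascadeFunctional T k f)
    (hT : IsCascadeShape T k) {a : Fin m} (ha : a ∈ T) (hak : (a : ℕ) + 2 ≤ k) (s : ℂ) :
    single a.succ a.succ.rev 1 - (s / f (single a.castSucc a.castSucc.rev 1)) •
        single a.succ a.castSucc.rev 1 ∈
      coadjointStab T (f + s • entryLinearMap ℂ ℂ a.castSucc a.succ.rev) := by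
  have hk := hT.two_mul_le
  obtain ⟨z, hz, hkz, hzk⟩ := hT.inner
  set g := f + s • entryLinearMap ℂ ℂ a.castSucc a.succ.rev with hg
  have hg_single (i j : Fin (m + 1)) (h : ¬(i = a.castSucc ∧ j = a.succ.rev)) :
      g (single i j 1) = f (single i j 1) := by
    rw [hg, add_smul_entryLinearMap_single, if_neg h, add_zero]
  have hg_corner : g (single a.castSucc a.succ.rev 1) = s := by
    rw [hg, add_smul_entryLinearMap_single, if_pos ⟨rfl, rfl⟩,
      hf.map_single_eq_zero _ _ ⟨a, ha, by grind, by grind⟩ (by grind), zero_add]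
  have hg_pivot := hg_single a.castSucc a.castSucc.rev (by grind)
  have hsep (r : Fin (m + 1)) (hr : a.succ.rev ≤ r) : Separates T a.succ r :=
    ⟨z, hz, by grind, by grind⟩
  have hleft (r : Fin (m + 1)) (hr : a.succ.rev ≤ r) {Y : Mat m} (hY : Y ∈ nilMatrices T) :
      g (single a.succ r 1 * Y) = 0 := by
    refine map_mul_eq_zero g fun i j l hij hjl => ?_
    obtain ⟨rfl, rfl⟩ : a.succ = i ∧ r = j :=
      by_contra fun h => hij (Matrix.single_apply_of_ne _ _ _ _ _ h)
    have hl := (not_imp_comm.1 (hY _ _) hjl).lt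
    rw [hg_single _ _ (by grind)]
    exact hf.map_single_eq_zero _ _ (hsep l (hr.trans hl.le)) (by grind)
  have hright (r : Fin (m + 1)) (hr : a.succ.rev ≤ r) (hr' : r ≤ a.castSucc.rev) {Y : Mat m}
      (hY : Y ∈ nilMatrices T) :
      g (Y * single a.succ r 1) = Y a.castSucc a.succ * g (single a.castSucc r 1) := by
    refine map_mul_single_eq hY _ fun i hi his => ?_
    have hi' := his.lt
    rw [hg_single _ _ (by grind)]
    exact hf.map_single_eq_zero _ _ (his.mono le_rfl (hsep r hr).lt.le) (by grind)
  refine ⟨sub_mem ?_ (SMulMemClass.smul_mem _ ?_), fun Y hY => ?_⟩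
  · exact single_mem_nilMatrices (hsep _ le_rfl) 1
  · exact single_mem_nilMatrices (hsep _ (by grind)) 1
  · have hpivot := hf.map_single_rev_ne_zero a.castSucc (by grind)
    rw [sub_mul, mul_sub, smul_mul_assoc, mul_smul_comm, map_sub, map_sub, map_sub, map_smul,
      map_smul, hleft _ le_rfl hY, hleft _ (by grind) hY, hright _ le_rfl (by grind) hY,
      hright _ (by grind) le_rfl hY, hg_corner, hg_pivot, smul_eq_mul, smul_eq_mul]
    field_simp
    ring

theorem exists_forall_mul_mul_notMem_of_rev_notMem (hf : IsCascadeFunctional T k f)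
    (hT : IsCascadeShape T k) {a : Fin m} (ha : a ∈ T) (hak : (a : ℕ) + 2 ≤ k) (hrev : a.rev ∉ T)
    {s : ℂ} (hs : s ≠ 0) :
    ∃ X ∈ coadjointStab T (f + s • entryLinearMap ℂ ℂ a.castSucc a.succ.rev),
      ∀ U V : Mat m, U - 1 ∈ nilMatrices T → V - 1 ∈ nilMatrices T →
        U * X * V ∉ coadjointStab T f := by
  have hpivot := hf.map_single_rev_ne_zero a.castSucc (by grind)
  refine ⟨_, hf.sub_smul_single_mem_coadjointStab hT ha hak s, fun U V hU hV hX => ?_⟩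
  have hzero := hf.apply_eq_zero_of_rev_separates hX (p := a.succ) (q := a.castSucc.rev)
    (by grind) ⟨a, ha, by grind, by grind⟩
  rw [mul_mul_apply_of_sub_one_mem_nilMatrices hU hV] at hzero
  · rw [Matrix.sub_apply, Matrix.smul_apply, Matrix.single_apply_same,
      Matrix.single_apply_of_col_ne _ _ (by grind), zero_sub, smul_eq_mul, mul_one,
      neg_eq_zero] at hzero
    exact div_ne_zero hs hpivot hzero
  · intro i j hi _ _
    rw [Matrix.sub_apply, Matrix.smul_apply, Matrix.single_apply_of_row_ne hi.symm,
      Matrix.single_apply_of_row_ne hi.symm, smul_zero, sub_zero]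
  · rintro j hj ⟨b, hb, hjb, hbq⟩
    rw [Matrix.sub_apply, Matrix.smul_apply, Matrix.single_apply_of_col_ne _ _ hj.symm,
      Matrix.single_apply_of_col_ne _ _ fun h => hrev ?_, smul_zero, sub_zero]
    obtain rfl : b = a.rev := by grind
    exact hb

theorem exists_mem_coadjointStab_forall_mul_mul_notMem (hf : IsCascadeFunctional T k f)
    (hT : IsCascadeShape T k) (hsym : ¬IsOuterSymmetric T k) :
    ∃ p q, Separates T p q ∧ ∀ s : ℂ, s ≠ 0 →
      ∃ X ∈ coadjointStab T (f + s • entryLinearMap ℂ ℂ p q),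
        ∀ U V : Mat m, U - 1 ∈ nilMatrices T → V - 1 ∈ nilMatrices T →
          U * X * V ∉ coadjointStab T f := by
  have hk := hT.two_mul_le
  simp only [IsOuterSymmetric, not_forall, exists_prop] at hsym
  obtain ⟨a, ha, hak | hak, hrev⟩ := hsym
  · exact ⟨a.castSucc, a.succ.rev, ⟨a, ha, by grind, by grind⟩, fun s hs =>
      hf.exists_forall_mul_mul_notMem_of_rev_notMem hT ha hak hrev hs⟩
  · refine ⟨a.rev.succ, a.succ, ⟨a, ha, by grind, by grind⟩, fun s hs => ?_⟩
    obtain ⟨X, hX, hconj⟩ :=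
      hf.comp_antitranspose.exists_forall_mul_mul_notMem_of_rev_notMem hT.image_rev
        (a := a.rev) (Finset.mem_image_of_mem _ ha) (by grind) (by grind) hs
    refine ⟨antitranspose X, ?_, fun U V hU hV hUV => ?_⟩
    · have hX' := antitranspose_mem_coadjointStab hX
      rw [image_rev_image_rev] at hX'
      convert hX' using 1
      refine congrArg _ (LinearMap.ext fun Y => ?_)
      simp only [LinearMap.comp_apply, LinearMap.add_apply, LinearMap.smul_apply,
        LinearEquiv.coe_coe, Matrix.entryLinearMap_apply, antitranspose_apply,
        antitranspose_antitranspose, Fin.rev_rev, Fin.rev_castSucc]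
    · have sub_one_mem {W : Mat m} (hW : W - 1 ∈ nilMatrices T) :
          antitranspose W - 1 ∈ nilMatrices (T.image Fin.rev) := by
        rw [← antitranspose_one, ← map_sub]
        exact antitranspose_mem_nilMatrices hW
      refine hconj (antitranspose V) (antitranspose U) (sub_one_mem hV) (sub_one_mem hU) ?_
      have h := antitranspose_mem_coadjointStab hUV
      rwa [antitranspose_mul, antitranspose_mul, antitranspose_antitranspose, ← mul_assoc] at h

end IsCascadeFunctional

namespace IsNormalisedFrame

variable {L : Type*} [LieRing L] [LieAlgebra ℂ L] [FiniteDimensional ℂ L]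
  [LieAlgebra.IsKilling ℂ L] {td : TriangularData L (Fin m)}
  {e : Fin (m + 1) → Fin (m + 1) → L} {v : L}

theorem isOuterSymmetric_of_isGenericStabPoint (he : IsNormalisedFrame td e)
    (hT : IsCascadeShape T k) (hf : IsCascadeFunctional T k (killingForm ℂ L v ∘ₗ frameMap e))
    (hgen : td.IsGenericStabPoint T (td.nilrad T) v) : IsOuterSymmetric T k := by
  by_contra hsym
  obtain ⟨p, q, hpq, hbad⟩ := hf.exists_mem_coadjointStab_forall_mul_mul_notMem hT hsym
  obtain ⟨Ω, hopen, -, ⟨hv, hvΩ⟩, hΩ⟩ := hgen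
  obtain ⟨t, ht, htΩ⟩ := hopen.exists_add_smul_mem hvΩ ⟨e q p, he.mem_negNilSub hpq⟩
  obtain ⟨x, hx, hmap⟩ := hΩ _ htΩ
  obtain ⟨X, hX, rfl⟩ := (he.mem_nilrad_iff x).1 hx
  have hXnil := isNilpotent_of_mem_nilMatrices hX
  obtain ⟨Z, hZ, hconj⟩ := hbad (t * killingForm ℂ L (e q p) (e p q))
    (mul_ne_zero ht (he.killingForm_ne_zero hpq.lt.ne'))
  have hline : ∀ Y ∈ nilMatrices T,
      (killingForm ℂ L (v + t • e q p) ∘ₗ frameMap e) Y =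
        (killingForm ℂ L v ∘ₗ frameMap e +
          (t * killingForm ℂ L (e q p) (e p q)) • entryLinearMap ℂ ℂ p q) Y := fun Y hY => by
    simp only [LinearMap.comp_apply, map_add, map_smul, LinearMap.add_apply, LinearMap.smul_apply,
      he.killingForm_frameMap hY hpq.lt.ne, Matrix.entryLinearMap_apply, smul_eq_mul]
    ring
  rw [← coadjointStab_congr hline,
    ← (he.map_nilExp_killStab_eq_iff hX v (v + t • e q p)).1 hmap] at hZ
  obtain ⟨Y, hY, rfl⟩ := hZ
  refine hconj (exp (-X)) (exp X) (exp_sub_one_mem_nilMatrices (neg_mem hX))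
    (exp_sub_one_mem_nilMatrices hX) ?_
  have hinv := exp_neg_mul_exp_self hXnil
  have hcancel : exp (-X) * (exp X * Y * exp (-X)) * exp X = Y := by
    calc _ = exp (-X) * exp X * Y * (exp (-X) * exp X) := by noncomm_ring
      _ = Y := by rw [hinv, one_mul, mul_one]
  rwa [hcancel]

theorem isGenericStabPoint_iff_isOuterSymmetric (he : IsNormalisedFrame td e)
    {K : Finset (Fin m → ℤ)} (hK : td.IsCascade K) (hk : 2 * k ≤ m + 1)
    (hcasc : ∀ j : Fin m, intv j j.rev ∈ td.cascadeK K T ↔ (j : ℕ) < k)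
    (hv : td.IsCascadePoint K T v) :
    td.IsGenericStabPoint T (td.nilrad T) v ↔ IsOuterSymmetric T k := by
  rcases k.eq_zero_or_pos with rfl | hpos
  · obtain rfl : T = ∅ := Finset.eq_empty_of_forall_notMem fun a ha => by
      have := he.outer_of_cascade hK hcasc ha
      omega
    exact iff_of_true (isGenericStabPoint_empty hv.mem_negNilSub) fun a ha =>
      absurd ha (Finset.notMem_empty a)
  · have hT := he.isCascadeShape hK hcasc hk hpos
    have hf := he.isCascadeFunctional hK hcasc hk hv
    exact ⟨he.isOuterSymmetric_of_isGenericStabPoint hT hf, fun hsym =>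
      he.isGenericStabPoint hT hsym hv.mem_negNilSub hf⟩

end IsNormalisedFrame

end NonGenericity

/-- Let `g = sl_{m+1}(ℂ)` (a simple Lie algebra whose root system is of
type `A_m` in simple-root coordinates) and `n = n_T` a nilradical with
`K(n) = {β₁, …, β_k}`, where `β_i = α_i + ⋯ + α_{m+1−i}`.  Set
`T' = T ∩ {α₁, …, α_{k−1}}` and `T'' = T ∩ {α_{m+2−k}, …, α_m}`.  Then the stabiliser
`n^ξ̄` of a cascade point is a generic stabiliser for `(n : n*)` iff `σ(T') = T''`,
where `σ(α_j) = α_{m+1−j}` is the symmetry of the Dynkin diagram.  In particular, if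
`σ(T) = T` then `n_T` has a generic stabiliser. -/
theorem slCase_generic_stabiliser_iff_symmetry
    {L : Type*} [LieRing L] [LieAlgebra ℂ L] [FiniteDimensional ℂ L]
    [LieAlgebra.IsSimple ℂ L]
    {m : ℕ} (td : TriangularData L (Fin m))
    (hA : ∀ γ : Fin m → ℤ, γ ∈ td.R ↔
      ∃ i j : Fin m, i ≤ j ∧ (γ = intv i j ∨ γ = -intv i j))
    (K : Finset (Fin m → ℤ)) (hK : td.IsCascade K)
    (T : Finset (Fin m)) (k : ℕ) (hk2 : 2 * k ≤ m + 1)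
    (hcasc : ∀ j : Fin m, (intv j j.rev ∈ td.cascadeK K T ↔ (j : ℕ) < k))
    (v : L) (hv : td.IsCascadePoint K T v) :
    (td.IsGenericStabPoint T (td.nilrad T) v ↔
      (T.filter fun a : Fin m => (a : ℕ) + 2 ≤ k).image Fin.rev =
        T.filter fun a : Fin m => m + 1 ≤ (a : ℕ) + k) ∧
    (T.image Fin.rev = T → ∃ w : L, td.IsGenericStabPoint T (td.nilrad T) w) := by
  obtain ⟨e₀, he₀⟩ := td.exists_isRootFrame hA
  obtain ⟨e, he⟩ := he₀.exists_isNormalisedFrame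
  have generic_iff := he.isGenericStabPoint_iff_isOuterSymmetric hK hk2 hcasc hv
  exact ⟨generic_iff.trans image_rev_filter_eq_iff_isOuterSymmetric.symm,
    fun hT => ⟨v, generic_iff.2 (isOuterSymmetric_of_image_rev_eq hT)⟩⟩

end
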